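/- arXiv:2003.12706 — 2 statements merged into one kernel-verified Lean document; each statement's English description precedes it below -/
import Mathlib

section
/- For |q|<1, G(q)^2/(G(q^2)^2·H(q^2)) = G(q^5)^2·G(q^{10}) + 2q·G(q^5)·H(q^5)·G(q^{10}) + q^2·G(q^5)^2·H(q^{10}) + q^4·H(q^5)^2·H(q^{10}). -/
/-!
Write `p = q⁵` and `f(a, b)` for Ramanujan's theta function; in the notation below `f(x, p / x)` is
`theta r x` with `r² = p`, and the Jacobi triple product `theta_eq_prod` writes it as an infinite
product. Since `(a²; p²) = (a; p)(-a; p)`, the left side has no denominator: it equals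
`f(q, q⁴) f(q², q³) · f(q, q⁴) f(-q², -q³) / (p; p)⁴`.

Each of the two pairs is a double series over `ℤ²`. The vectors `(1, 2)` and `(2, -1)` are orthogonal
and of norm `5`, so splitting `ℤ²` into the five cosets of the lattice they span (`theta_mul_five`)
dissects each pair according to the exponent of `q` modulo `5`. With theta functions of base `p⁵`,
`A = f(p², p³)`, `B = f(p, p⁴)`, `T = f(1, p⁵)`, `A' = f(-p², -p³)`, `B' = f(-p, -p⁴)`, this gives
(`dissections`)

* `f(q, q⁴) f(q², q³) = A² + q A B + q² B² + q³ T A + q⁴ T B`,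
* `f(q, q⁴) f(-q², -q³) = A A' + q A B' - q² B B' - q³ T A'`.

In the product of the two, the terms with exponent `3` modulo `5` cancel, and the other classes
combine into the left sides of (`three_term`)

* `A³ B - p B³ T = A'³ B'`, `A² B² - p A B T² = A'² B'²`, `A³ T - A B³ = A' B'³`.

These are instances of the three-term relation for theta functions (`weierstrass`), a Plücker relation
between two-by-two determinants. On the right side, with `C = (p⁵; p⁵)`, one has
`G(q⁵) = C / B'`, `H(q⁵) = C / A'`, `G(q¹⁰) = C² / (B B')`, `H(q¹⁰) = C² / (A A')`, and the constants
match because `(p; p) C = A' B'`.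
-/

noncomputable def qp (a q : ℂ) : ℂ := ∏' k : ℕ, (1 - a * q ^ k)

noncomputable def GG (q : ℂ) : ℂ := 1 / (qp q (q ^ 5) * qp (q ^ 4) (q ^ 5))

noncomputable def HH (q : ℂ) : ℂ := 1 / (qp (q ^ 2) (q ^ 5) * qp (q ^ 3) (q ^ 5))

noncomputable def RR (q : ℂ) : ℂ :=
  (qp q (q ^ 5) * qp (q ^ 4) (q ^ 5)) / (qp (q ^ 2) (q ^ 5) * qp (q ^ 3) (q ^ 5))

noncomputable def phi (q : ℂ) : ℂ := ∑' n : ℤ, q ^ (n.natAbs ^ 2)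

noncomputable def psi (q : ℂ) : ℂ := ∑' n : ℕ, q ^ (n * (n + 1) / 2)

open Filter Topology Finset

/-! ### Infinite products -/

lemma summable_norm_geom (a : ℂ) {p : ℂ} (hp : ‖p‖ < 1) :
    Summable fun k : ℕ => ‖-(a * p ^ k)‖ := by
  simp only [norm_neg, norm_mul, norm_pow]
  exact (summable_geometric_of_lt_one (norm_nonneg p) hp).mul_left _

lemma tendsto_qp (a : ℂ) {p : ℂ} (hp : ‖p‖ < 1) :
    Tendsto (fun n => ∏ k ∈ range n, (1 - a * p ^ k)) atTop (𝓝 (qp a p)) := by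
  have h := (multipliable_one_add_of_summable (summable_norm_geom a hp)).tendsto_prod_tprod_nat
  simp only [← sub_eq_add_neg] at h
  exact h

lemma qp_ne_zero {a p : ℂ} (hp : ‖p‖ < 1) (h : ∀ k : ℕ, a * p ^ k ≠ 1) : qp a p ≠ 0 := by
  have := tprod_one_add_ne_zero_of_summable (f := fun k : ℕ => -(a * p ^ k))
    (fun k hk => h k (by linear_combination -hk)) (summable_norm_geom a hp)
  simp only [← sub_eq_add_neg] at this
  exact this

lemma qp_ne_zero_of_norm_lt {a p : ℂ} (hp : ‖p‖ < 1) (ha : ‖a‖ < 1) : qp a p ≠ 0 := by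
  refine qp_ne_zero hp fun k hk => ?_
  have h1 : ‖a * p ^ k‖ = 1 := by rw [hk, norm_one]
  rw [norm_mul, norm_pow] at h1
  have h2 : ‖p‖ ^ k ≤ 1 := pow_le_one₀ (norm_nonneg _) hp.le
  nlinarith [norm_nonneg a, norm_nonneg p]

lemma qp_sq (a : ℂ) {p : ℂ} (hp : ‖p‖ < 1) : qp (a ^ 2) (p ^ 2) = qp a p * qp (-a) p := by
  have hp2 : ‖p ^ 2‖ < 1 := by rw [norm_pow]; exact pow_lt_one₀ (norm_nonneg _) hp two_ne_zero
  refine tendsto_nhds_unique (tendsto_qp _ hp2) ?_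
  refine ((tendsto_qp a hp).mul (tendsto_qp (-a) hp)).congr fun n => ?_
  rw [← prod_mul_distrib]
  refine prod_congr rfl fun k _ => ?_
  ring

lemma qp_five (p : ℂ) (hp : ‖p‖ < 1) :
    qp p p = qp p (p ^ 5) * qp (p ^ 2) (p ^ 5) * qp (p ^ 3) (p ^ 5) * qp (p ^ 4) (p ^ 5) *
      qp (p ^ 5) (p ^ 5) := by
  have hp5 : ‖p ^ 5‖ < 1 := by rw [norm_pow]; exact pow_lt_one₀ (norm_nonneg _) hp (by norm_num)
  have h5 : Tendsto (fun n : ℕ => n * 5) atTop atTop :=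
    tendsto_id.atTop_mul_const' (by norm_num)
  refine tendsto_nhds_unique ((tendsto_qp p hp).comp h5) ?_
  refine (((((tendsto_qp p hp5).mul (tendsto_qp _ hp5)).mul (tendsto_qp _ hp5)).mul
    (tendsto_qp _ hp5)).mul (tendsto_qp _ hp5)).congr fun n => ?_
  simp only [Function.comp]
  induction n with
  | zero => simp
  | succ n ih =>
    rw [show (n + 1) * 5 = n * 5 + 1 + 1 + 1 + 1 + 1 by ring]
    simp only [prod_range_succ] at ih ⊢
    rw [← ih]
    ring

/-! ### Gaussian binomial coefficients -/

/-- The Gaussian binomial coefficient `[N choose k]` at `p`, defined by the `q`-Pascal rule;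
it vanishes for `k > N`. -/
noncomputable def gaussBin (p : ℂ) : ℕ → ℕ → ℂ
  | _, 0 => 1
  | 0, _ + 1 => 0
  | N + 1, k + 1 => gaussBin p N k + p ^ (k + 1) * gaussBin p N (k + 1)

lemma gaussBin_zero (p : ℂ) (N : ℕ) : gaussBin p N 0 = 1 := by cases N <;> rfl

lemma gaussBin_succ (p : ℂ) (N k : ℕ) : gaussBin p (N + 1) (k + 1) =
    gaussBin p N k + p ^ (k + 1) * gaussBin p N (k + 1) := rfl

lemma gaussBin_of_lt (p : ℂ) {N k : ℕ} (h : N < k) : gaussBin p N k = 0 := by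
  induction N generalizing k with
  | zero => obtain ⟨k, rfl⟩ := Nat.exists_eq_succ_of_ne_zero h.ne'; rfl
  | succ N ih =>
    obtain ⟨k, rfl⟩ := Nat.exists_eq_succ_of_ne_zero (Nat.ne_of_gt (Nat.zero_lt_of_lt h))
    rw [Nat.succ_eq_add_one, gaussBin_succ, ih (by omega), ih (by omega)]
    simp

lemma gaussBin_mul (p : ℂ) (m l : ℕ) :
    gaussBin p (m + l) m * (∏ i ∈ range m, (1 - p * p ^ i)) * ∏ i ∈ range l, (1 - p * p ^ i) =
      ∏ i ∈ range (m + l), (1 - p * p ^ i) := by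
  obtain ⟨N, hN⟩ : ∃ N, m + l = N := ⟨_, rfl⟩
  induction N generalizing m l with
  | zero => obtain ⟨rfl, rfl⟩ : m = 0 ∧ l = 0 := by omega
            simp [gaussBin_zero]
  | succ N ih =>
    rcases m with _ | m
    · simp [gaussBin_zero]
    rcases l with _ | l
    · have h := ih m 0 (by omega)
      rw [show m + 1 + 0 = m + 1 by rfl, gaussBin_succ, gaussBin_of_lt p (Nat.lt_succ_self m)]
      simp only [add_zero, prod_range_succ] at h ⊢
      rw [prod_range_zero] at h ⊢
      linear_combination (1 - p * p ^ m) * h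
    · have h1 := ih m (l + 1) (by omega)
      have h2 := ih (m + 1) l (by omega)
      rw [show m + 1 + l = m + (l + 1) by ring] at h2
      rw [show m + 1 + (l + 1) = m + (l + 1) + 1 by ring, gaussBin_succ,
        prod_range_succ _ (m + (l + 1))]
      rw [prod_range_succ _ l] at h1 ⊢
      rw [prod_range_succ _ m] at h2 ⊢
      linear_combination (1 - p * p ^ m) * h1 + p ^ (m + 1) * (1 - p * p ^ l) * h2

/-- Cauchy's `q`-binomial theorem, with `r` a square root of the base. -/
lemma prod_eq_sum_gaussBin {r : ℂ} (hr : r ≠ 0) (N : ℕ) (z : ℂ) :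
    ∏ k ∈ range N, (1 + z * (r ^ 2) ^ k) =
      ∑ k ∈ range (N + 1), gaussBin (r ^ 2) N k * r ^ ((k : ℤ) * (k - 1)) * z ^ k := by
  induction N generalizing z with
  | zero => simp [gaussBin_zero]
  | succ N ih =>
    set g : ℕ → ℂ := fun k => gaussBin (r ^ 2) N k * r ^ ((k : ℤ) * (k - 1)) * (z * r ^ 2) ^ k
      with hg
    have hprod : ∏ k ∈ range (N + 1), (1 + z * (r ^ 2) ^ k) =
        (∑ k ∈ range (N + 1), g k) * (1 + z) := by
      rw [prod_range_succ', ← ih (z * r ^ 2)]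
      simp only [pow_zero, mul_one]
      congr 1
      exact prod_congr rfl fun k _ => by ring
    have hlast : ∑ k ∈ range (N + 1), g (k + 1) + g 0 = ∑ k ∈ range (N + 1), g k := by
      rw [← sum_range_succ', sum_range_succ _ (N + 1)]
      simp [hg, gaussBin_of_lt]
    have hsplit : (∑ k ∈ range (N + 1), g k) * (1 + z) =
        ∑ k ∈ range (N + 1), (g (k + 1) + g k * z) + g 0 := by
      rw [sum_add_distrib, ← sum_mul]
      linear_combination -hlast
    rw [hprod, hsplit, sum_range_succ' _ (N + 1)]
    congr 1
    · refine sum_congr rfl fun k _ => ?_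
      have e : r ^ (((k + 1 : ℕ) : ℤ) * ((k + 1 : ℕ) - 1)) =
          r ^ ((k : ℤ) * (k - 1)) * (r ^ 2) ^ k := by
        rw [← pow_mul, ← zpow_natCast, ← zpow_add₀ hr]
        congr 1
        push_cast
        ring
      simp only [hg, gaussBin_succ, e]
      ring
    · simp [hg, gaussBin_zero]

/-- By `gaussBin_mul` the Gaussian binomials are quotients of partial products of `(p; p)`, which
converge to a nonzero limit and so are bounded together with their inverses. -/
lemma gaussBin_bound {p : ℂ} (hp : ‖p‖ < 1) : ∃ M : ℝ, ∀ N k, ‖gaussBin p N k‖ ≤ M := by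
  have ht := tendsto_qp p hp
  have h0 : qp p p ≠ 0 := qp_ne_zero_of_norm_lt hp hp
  obtain ⟨A, hA⟩ := (Metric.isBounded_range_of_tendsto _ ht).exists_norm_le
  obtain ⟨B, hB⟩ := (Metric.isBounded_range_of_tendsto _ (ht.inv₀ h0)).exists_norm_le
  have hA0 : 0 ≤ A := (norm_nonneg _).trans (hA _ ⟨0, rfl⟩)
  have hB0 : 0 ≤ B := (norm_nonneg _).trans (hB _ ⟨0, rfl⟩)
  have hne : ∀ n, ∏ i ∈ range n, (1 - p * p ^ i) ≠ 0 := fun n => by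
    refine prod_ne_zero_iff.2 fun i _ h => ?_
    have h1 : ‖p ^ (i + 1)‖ < 1 := by
      rw [norm_pow]; exact pow_lt_one₀ (norm_nonneg _) hp (by omega)
    rw [show p ^ (i + 1) = 1 by linear_combination -h, norm_one] at h1
    exact lt_irrefl _ h1
  refine ⟨A * B * B, fun N k => ?_⟩
  rcases lt_or_ge N k with h | h
  · rw [gaussBin_of_lt p h, norm_zero]; positivity
  · obtain ⟨l, rfl⟩ := Nat.exists_eq_add_of_le h
    have e : gaussBin p (k + l) k = (∏ i ∈ range (k + l), (1 - p * p ^ i)) *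
        (∏ i ∈ range k, (1 - p * p ^ i))⁻¹ * (∏ i ∈ range l, (1 - p * p ^ i))⁻¹ := by
      rw [← gaussBin_mul]
      field_simp [hne k, hne l]
    rw [e, norm_mul, norm_mul]
    gcongr
    · exact hA _ ⟨_, rfl⟩
    · exact hB _ ⟨k, rfl⟩
    · exact hB _ ⟨l, rfl⟩

lemma tendsto_gaussBin {p : ℂ} (hp : ‖p‖ < 1) (j : ℤ) :
    Tendsto (fun n : ℕ => gaussBin p (2 * n) (n + j).toNat) atTop (𝓝 (qp p p)⁻¹) := by
  have ht := tendsto_qp p hp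
  have h0 : qp p p ≠ 0 := qp_ne_zero_of_norm_lt hp hp
  have t1 : Tendsto (fun n : ℕ => 2 * n) atTop atTop :=
    tendsto_id.const_mul_atTop' (by norm_num)
  have t2 : ∀ j : ℤ, Tendsto (fun n : ℕ => ((n : ℤ) + j).toNat) atTop atTop := fun j =>
    tendsto_atTop.2 fun b => by
      filter_upwards [eventually_ge_atTop (b + j.natAbs)] with n hn
      omega
  have key := ((ht.comp t1).mul ((ht.comp (t2 j)).inv₀ h0)).mul ((ht.comp (t2 (-j))).inv₀ h0)
  rw [mul_inv_cancel₀ h0, one_mul] at key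
  refine key.congr' ?_
  have hev : ∀ j : ℤ, ∀ᶠ n : ℕ in atTop,
      ∏ i ∈ range ((n : ℤ) + j).toNat, (1 - p * p ^ i) ≠ 0 := fun j =>
    (ht.comp (t2 j)).eventually_ne h0
  filter_upwards [eventually_ge_atTop j.natAbs, hev j, hev (-j)] with n hn h1 h2
  have := gaussBin_mul p ((n : ℤ) + j).toNat ((n : ℤ) + -j).toNat
  rw [show ((n : ℤ) + j).toNat + ((n : ℤ) + -j).toNat = 2 * n by omega] at this
  simp only [Function.comp]
  rw [← this]
  field_simp

/-! ### Theta series and the Jacobi triple product -/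

/-- The theta series `∑ p ^ (j (j - 1) / 2) x ^ j` over all integers `j`, with base `p = r ^ 2`;
taking the square root `r` of the base as parameter keeps all exponents integral. In terms of
Ramanujan's function this is `f(x, p / x)`. -/
noncomputable def theta (r x : ℂ) : ℂ := ∑' j : ℤ, r ^ (j * (j - 1)) * x ^ j

lemma summable_norm_theta {r x : ℂ} (hr : r ≠ 0) (hr1 : ‖r‖ < 1) (hx : x ≠ 0) :
    Summable fun j : ℤ => ‖r ^ (j * (j - 1)) * x ^ j‖ := by
  have hpi : (Real.pi : ℂ) ≠ 0 := by exact_mod_cast Real.pi_ne_zero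
  set τ : ℂ := Complex.log r / (Real.pi * Complex.I) with hτ
  set z : ℂ := (Complex.log x - Complex.log r) / (2 * Real.pi * Complex.I) with hz
  have him : 0 < τ.im := by
    have e : τ = ((-1 / Real.pi : ℝ) : ℂ) * (Complex.I * Complex.log r) := by
      rw [hτ]; push_cast; field_simp; simp [Complex.I_sq]
    rw [e, Complex.im_ofReal_mul, Complex.I_mul_im, Complex.log_re]
    have h1 : Real.log ‖r‖ < 0 := Real.log_neg (norm_pos_iff.2 hr) hr1
    have h2 := Real.pi_pos
    rw [div_mul_eq_mul_div]
    apply div_pos _ h2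
    linarith
  refine (((summable_jacobiTheta₂_term_iff z τ).2 him).congr fun j => ?_).norm
  have e1 : r ^ (j * (j - 1)) = Complex.exp ((j * (j - 1) : ℤ) * Complex.log r) := by
    rw [Complex.exp_int_mul, Complex.exp_log hr]
  have e2 : x ^ j = Complex.exp (j * Complex.log x) := by
    rw [Complex.exp_int_mul, Complex.exp_log hx]
  rw [e1, e2, ← Complex.exp_add, jacobiTheta₂_term, hτ, hz]
  congr 1
  push_cast
  field_simp
  ring

/-- The finite form of the triple product: Cauchy's theorem for `2 n` factors, recentred. -/
lemma finite_triple_product {r x : ℂ} (hr : r ≠ 0) (hx : x ≠ 0) (n : ℕ) :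
    (∏ k ∈ range n, (1 - -x * (r ^ 2) ^ k)) * ∏ k ∈ range n, (1 - -(r ^ 2) / x * (r ^ 2) ^ k) =
      ∑' j : ℤ, if -(n : ℤ) ≤ j then
        gaussBin (r ^ 2) (2 * n) (n + j).toNat * (r ^ (j * (j - 1)) * x ^ j) else 0 := by
  have hsum : (∑' j : ℤ, if -(n : ℤ) ≤ j then
        gaussBin (r ^ 2) (2 * n) (n + j).toNat * (r ^ (j * (j - 1)) * x ^ j) else 0) =
      ∑ k ∈ range (2 * n + 1), gaussBin (r ^ 2) (2 * n) k *
        (r ^ (((k : ℤ) - n) * ((k : ℤ) - n - 1)) * x ^ ((k : ℤ) - n)) := by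
    rw [tsum_eq_sum (s := (range (2 * n + 1)).image fun k : ℕ => (k : ℤ) - n), sum_image]
    · refine sum_congr rfl fun k _ => ?_
      rw [if_pos (by omega), show ((n : ℤ) + (k - n)).toNat = k by omega]
    · intro a _ b _ h
      simpa using h
    · intro j hj
      split_ifs with h
      · rw [gaussBin_of_lt, zero_mul]
        by_contra! hlt
        refine hj (mem_image.2 ⟨((n : ℤ) + j).toNat, mem_range.2 (by omega), ?_⟩)
        omega
      · rfl
  have hC := prod_eq_sum_gaussBin hr (2 * n) (x * r ^ (-2 * n : ℤ))
  -- the lower half of the factors, turned around with `1 + x p⁻ᵏ = x p⁻ᵏ (1 + pᵏ / x)`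
  have hlow : ∀ m : ℕ, ∏ k ∈ range m, (1 + x * (r ^ 2)⁻¹ ^ (k + 1)) =
      x ^ m * r ^ (-(m : ℤ) * (m + 1)) * ∏ k ∈ range m, (1 - -(r ^ 2) / x * (r ^ 2) ^ k) := by
    intro m
    induction m with
    | zero => simp
    | succ m ih =>
      rw [prod_range_succ, prod_range_succ, ih]
      have e : r ^ (-((m + 1 : ℕ) : ℤ) * ((m + 1 : ℕ) + 1)) =
          r ^ (-(m : ℤ) * (m + 1)) * ((r ^ 2) ^ (m + 1))⁻¹ := by
        rw [← pow_mul, ← zpow_natCast, ← zpow_neg, ← zpow_add₀ hr]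
        congr 1
        push_cast
        ring
      rw [e, inv_pow]
      field_simp
      ring
  have hrev : ∏ k ∈ range (2 * n), (1 + x * r ^ (-2 * n : ℤ) * (r ^ 2) ^ k) =
      (∏ k ∈ range n, (1 + x * (r ^ 2)⁻¹ ^ (k + 1))) *
        ∏ k ∈ range n, (1 - -x * (r ^ 2) ^ k) := by
    have e0 : r ^ (-2 * n : ℤ) = ((r ^ 2) ^ n)⁻¹ := by
      rw [← pow_mul, ← zpow_natCast, ← zpow_neg]; push_cast; ring_nf
    rw [two_mul, prod_range_add, e0, ← prod_range_reflect]
    congr 1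
    · refine prod_congr rfl fun k hk => ?_
      have hk' := mem_range.1 hk
      obtain ⟨l, rfl⟩ : ∃ l, n = k + 1 + l := Nat.exists_eq_add_of_le hk'
      rw [show k + 1 + l - 1 - k = l by omega, inv_pow]
      field_simp
      ring
    · refine prod_congr rfl fun k _ => ?_
      rw [pow_add]
      field_simp
      ring
  have hne : x ^ n * r ^ (-(n : ℤ) * (n + 1)) ≠ 0 :=
    mul_ne_zero (pow_ne_zero _ hx) (zpow_ne_zero _ hr)
  rw [hsum]
  apply mul_left_cancel₀ hne
  rw [hrev, hlow] at hC
  rw [mul_sum]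
  refine Eq.trans (by ring) (hC.trans (sum_congr rfl fun k _ => ?_))
  have e1 : r ^ ((k : ℤ) * (k - 1)) * (r ^ (-2 * n : ℤ)) ^ k =
      r ^ (-(n : ℤ) * (n + 1)) * r ^ (((k : ℤ) - n) * ((k : ℤ) - n - 1)) := by
    rw [← zpow_natCast (r ^ (-2 * n : ℤ)), ← zpow_mul, ← zpow_add₀ hr, ← zpow_add₀ hr]
    congr 1
    ring
  have e2 : x ^ k = x ^ n * x ^ ((k : ℤ) - n) := by
    rw [← zpow_natCast x n, ← zpow_add₀ hx, ← zpow_natCast]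
    congr 1
    ring
  rw [mul_pow, e2]
  linear_combination (gaussBin (r ^ 2) (2 * n) k * x ^ n * x ^ ((k : ℤ) - n)) * e1

/-- The Jacobi triple product, as the limit of its finite form (dominated convergence, the Gaussian
binomials being bounded and tending to `1 / (p; p)`). -/
lemma theta_eq_prod {r x : ℂ} (hr : r ≠ 0) (hr1 : ‖r‖ < 1) (hx : x ≠ 0) :
    theta r x = qp (r ^ 2) (r ^ 2) * (qp (-x) (r ^ 2) * qp (-(r ^ 2) / x) (r ^ 2)) := by
  have hp : ‖r ^ 2‖ < 1 := by rw [norm_pow]; exact pow_lt_one₀ (norm_nonneg _) hr1 two_ne_zero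
  have h0 : qp (r ^ 2) (r ^ 2) ≠ 0 := qp_ne_zero_of_norm_lt hp hp
  obtain ⟨M, hM⟩ := gaussBin_bound hp
  have hlim := tendsto_tsum_of_dominated_convergence (𝓕 := atTop)
    (f := fun (n : ℕ) (j : ℤ) => if -(n : ℤ) ≤ j then
        gaussBin (r ^ 2) (2 * n) (n + j).toNat * (r ^ (j * (j - 1)) * x ^ j) else 0)
    (g := fun j : ℤ => (qp (r ^ 2) (r ^ 2))⁻¹ * (r ^ (j * (j - 1)) * x ^ j))
    ((summable_norm_theta hr hr1 hx).mul_left M)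
    (fun j => by
      refine ((tendsto_gaussBin hp j).mul_const _).congr' ?_
      filter_upwards [eventually_ge_atTop j.natAbs] with n hn
      rw [if_pos (by omega)])
    (Eventually.of_forall fun n j => by
      split_ifs
      · rw [norm_mul]
        gcongr
        exact hM _ _
      · rw [norm_zero]
        exact mul_nonneg ((norm_nonneg _).trans (hM 0 0)) (norm_nonneg _))
  rw [tsum_mul_left] at hlim
  have hlim' := ((tendsto_qp (-x) hp).mul (tendsto_qp (-(r ^ 2) / x) hp)).congr
    fun n => finite_triple_product hr hx n
  have := tendsto_nhds_unique hlim hlim'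
  rw [← this, theta]
  field_simp

lemma theta_shift {r x : ℂ} (hr : r ≠ 0) (hx : x ≠ 0) : theta r (r ^ 2 * x) = theta r x / x := by
  rw [theta, theta, div_eq_mul_inv, ← tsum_mul_right,
    ← (Equiv.addRight (1 : ℤ)).tsum_eq fun j => r ^ (j * (j - 1)) * x ^ j * x⁻¹]
  refine tsum_congr fun j => ?_
  have e : r ^ ((j + 1) * (j + 1 - 1)) = r ^ (j * (j - 1)) * (r ^ 2) ^ j := by
    rw [← zpow_natCast, ← zpow_mul, ← zpow_add₀ hr]
    congr 1
    push_cast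
    ring
  simp only [Equiv.coe_addRight]
  rw [e, mul_zpow, zpow_add_one₀ hx]
  field_simp

/-- Dissection of a product of two theta series along a partition of `ℤ × ℤ` into `d` cosets of a
sublattice on which the quadratic form becomes diagonal again. -/
lemma theta_mul_theta {d : ℕ} {r R x y : ℂ} (hr : r ≠ 0) (hr1 : ‖r‖ < 1) (hR : R ≠ 0)
    (hR1 : ‖R‖ < 1) (hx : x ≠ 0) (hy : y ≠ 0) (e : Fin d × (ℤ × ℤ) ≃ ℤ × ℤ) (c u v : Fin d → ℂ)
    (hu : ∀ k, u k ≠ 0) (hv : ∀ k, v k ≠ 0)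
    (h : ∀ k s t, r ^ ((e (k, s, t)).1 * ((e (k, s, t)).1 - 1)) * x ^ (e (k, s, t)).1 *
        (r ^ ((e (k, s, t)).2 * ((e (k, s, t)).2 - 1)) * y ^ (e (k, s, t)).2) =
      c k * ((R ^ (s * (s - 1)) * u k ^ s) * (R ^ (t * (t - 1)) * v k ^ t))) :
    theta r x * theta r y = ∑ k, c k * (theta R (u k) * theta R (v k)) := by
  have hsum := summable_mul_of_summable_norm (summable_norm_theta hr hr1 hx)
    (summable_norm_theta hr hr1 hy)
  rw [theta, theta, tsum_mul_tsum_of_summable_norm (summable_norm_theta hr hr1 hx)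
    (summable_norm_theta hr hr1 hy), ← e.tsum_eq]
  refine (Summable.tsum_prod (e.summable_iff.2 hsum)).trans ?_
  rw [tsum_fintype]
  refine sum_congr rfl fun k _ => ?_
  rw [theta, theta, tsum_mul_tsum_of_summable_norm (summable_norm_theta hR hR1 (hu k))
    (summable_norm_theta hR hR1 (hv k)), ← tsum_mul_left]
  exact tsum_congr fun z => h k z.1 z.2

/-- The two-dissection: `(m, n)` is written as `s (1, 1) + t (1, -1) + (k, 0)` with `k = 0, 1`. -/
lemma theta_mul_two {r x y : ℂ} (hr : r ≠ 0) (hr1 : ‖r‖ < 1) (hx : x ≠ 0) (hy : y ≠ 0) :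
    theta r x * theta r y = theta (r ^ 2) (x * y) * theta (r ^ 2) (r ^ 2 * (x / y)) +
      y * (theta (r ^ 2) (r ^ 2 * (x * y)) * theta (r ^ 2) (x / y)) := by
  have hR : r ^ 2 ≠ 0 := pow_ne_zero _ hr
  have hR1 : ‖r ^ 2‖ < 1 := by rw [norm_pow]; exact pow_lt_one₀ (norm_nonneg _) hr1 two_ne_zero
  let e : Fin 2 × (ℤ × ℤ) ≃ ℤ × ℤ :=
    { toFun := fun z => (z.2.1 + z.2.2 + (z.1 : ℕ), z.2.1 - z.2.2)
      invFun := fun z => (⟨((z.1 + z.2) % 2).toNat, by omega⟩, (z.1 + z.2) / 2,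
        (z.1 + z.2) / 2 - z.2)
      left_inv := by
        rintro ⟨⟨k, hk⟩, s, t⟩
        simp only [Prod.mk.injEq, Fin.mk.injEq]
        omega
      right_inv := by
        rintro ⟨m, n⟩
        simp only [Prod.mk.injEq]
        omega }
  rw [theta_mul_theta hr hr1 hR hR1 hx hy e
    (fun k => r ^ (((k : ℕ) : ℤ) * (((k : ℕ) : ℤ) - 1)) * x ^ ((k : ℕ) : ℤ))
    (fun k => x * y * r ^ (2 * ((k : ℕ) : ℤ)))
    (fun k => x * y⁻¹ * r ^ (2 + 2 * ((k : ℕ) : ℤ)))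
    (fun k => mul_ne_zero (mul_ne_zero hx hy) (zpow_ne_zero _ hr))
    (fun k => mul_ne_zero (mul_ne_zero hx (inv_ne_zero hy)) (zpow_ne_zero _ hr))]
  · rw [Fin.sum_univ_two]
    have e1 : x * y⁻¹ * r ^ (2 + 2 * (1 : ℤ)) = (r ^ 2) ^ 2 * (x / y) := by
      rw [show (2 + 2 * (1 : ℤ)) = ((4 : ℕ) : ℤ) by norm_num, zpow_natCast]; field_simp
    have e2 : x * y⁻¹ * r ^ (2 + 2 * (0 : ℤ)) = r ^ 2 * (x / y) := by
      rw [show (2 + 2 * (0 : ℤ)) = ((2 : ℕ) : ℤ) by norm_num, zpow_natCast]; field_simp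
    have e3 : x * y * r ^ (2 * (1 : ℤ)) = r ^ 2 * (x * y) := by
      rw [show (2 * (1 : ℤ)) = ((2 : ℕ) : ℤ) by norm_num, zpow_natCast]; ring
    simp only [Fin.val_zero, Fin.val_one, Nat.cast_zero, Nat.cast_one]
    rw [e1, e2, e3, theta_shift hR (div_ne_zero hx hy)]
    simp only [mul_zero, zero_mul, sub_self, zpow_zero, zpow_one, mul_one, one_mul]
    field_simp
  · rintro ⟨k, hk⟩ s t
    simp only [e, Equiv.coe_fn_mk]
    generalize ((k : ℕ) : ℤ) = k
    have h1 : (x * y * r ^ (2 * k)) ^ s = x ^ s * y ^ s * r ^ (2 * k * s) := by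
      rw [mul_zpow, mul_zpow, ← zpow_mul]
    have h2 : (x * y⁻¹ * r ^ (2 + 2 * k)) ^ t = x ^ t * y ^ (-t) * r ^ ((2 + 2 * k) * t) := by
      rw [mul_zpow, mul_zpow, ← zpow_mul, inv_zpow']
    have h3 : ∀ a : ℤ, (r ^ 2) ^ a = r ^ (2 * a) := fun a => by
      rw [← zpow_natCast, ← zpow_mul]; rfl
    have h4 : r ^ ((s + t + k) * (s + t + k - 1)) * r ^ ((s - t) * (s - t - 1)) =
        r ^ (k * (k - 1)) * r ^ (2 * (s * (s - 1))) * r ^ (2 * k * s) * r ^ (2 * (t * (t - 1))) *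
          r ^ ((2 + 2 * k) * t) := by
      simp only [← zpow_add₀ hr]
      congr 1
      ring
    rw [h1, h2, h3, h3, zpow_add₀ hx, zpow_add₀ hx, sub_eq_add_neg s t, zpow_add₀ hy,
      ← sub_eq_add_neg]
    linear_combination (x ^ s * x ^ t * x ^ k * y ^ s * y ^ (-t)) * h4

/-- The five-dissection of a product of two theta series: `(m, n)` is written as
`s (1, 2) + t (2, -1) + (k, 0)` with `0 ≤ k < 5`, and `(1, 2)`, `(2, -1)` are orthogonal of
norm `5`. -/
lemma theta_mul_five {r x y : ℂ} (hr : r ≠ 0) (hr1 : ‖r‖ < 1) (hx : x ≠ 0) (hy : y ≠ 0) :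
    theta r x * theta r y = ∑ k : Fin 5, r ^ ((k : ℕ) * ((k : ℕ) - 1)) * x ^ (k : ℕ) *
      (theta (r ^ 5) (x * y ^ 2 * r ^ (2 + 2 * (k : ℕ))) *
        theta (r ^ 5) (x ^ 2 * y⁻¹ * r ^ (4 + 4 * (k : ℕ)))) := by
  have hR : r ^ 5 ≠ 0 := pow_ne_zero _ hr
  have hR1 : ‖r ^ 5‖ < 1 := by
    rw [norm_pow]; exact pow_lt_one₀ (norm_nonneg _) hr1 (by norm_num)
  let e : Fin 5 × (ℤ × ℤ) ≃ ℤ × ℤ :=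
    { toFun := fun z => (z.2.1 + 2 * z.2.2 + (z.1 : ℕ), 2 * z.2.1 - z.2.2)
      invFun := fun z => (⟨((z.1 + 2 * z.2) % 5).toNat, by omega⟩, (z.1 + 2 * z.2) / 5,
        2 * ((z.1 + 2 * z.2) / 5) - z.2)
      left_inv := by
        rintro ⟨⟨k, hk⟩, s, t⟩
        simp only [Prod.mk.injEq, Fin.mk.injEq]
        omega
      right_inv := by
        rintro ⟨m, n⟩
        simp only [Prod.mk.injEq]
        omega }
  refine theta_mul_theta hr hr1 hR hR1 hx hy e _ _ _
    (fun k => mul_ne_zero (mul_ne_zero hx (pow_ne_zero _ hy)) (pow_ne_zero _ hr))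
    (fun k => mul_ne_zero (mul_ne_zero (pow_ne_zero _ hx) (inv_ne_zero hy)) (pow_ne_zero _ hr)) ?_
  rintro ⟨k, hk⟩ s t
  have h1 : (x * y ^ 2 * r ^ (2 + 2 * k)) ^ s =
      x ^ s * y ^ (2 * s) * r ^ ((2 + 2 * (k : ℤ)) * s) := by
    rw [mul_zpow, mul_zpow, ← zpow_natCast, ← zpow_mul, ← zpow_natCast, ← zpow_mul]
    push_cast
    rfl
  have h2 : (x ^ 2 * y⁻¹ * r ^ (4 + 4 * k)) ^ t =
      x ^ (2 * t) * y ^ (-t) * r ^ ((4 + 4 * (k : ℤ)) * t) := by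
    rw [mul_zpow, mul_zpow, ← zpow_natCast, ← zpow_mul, ← zpow_natCast, ← zpow_mul, inv_zpow']
    push_cast
    rfl
  have h3 : ∀ a : ℤ, (r ^ 5) ^ a = r ^ (5 * a) := fun a => by
    rw [← zpow_natCast, ← zpow_mul]; rfl
  -- the truncated `k - 1` is harmless, being multiplied by `k`
  have h0 : r ^ (k * (k - 1)) = r ^ ((k : ℤ) * (k - 1)) := by
    rw [← zpow_natCast]
    rcases k with _ | k
    · simp
    · push_cast [Nat.add_sub_cancel]
      simp
  have h4 : r ^ ((s + 2 * t + k) * (s + 2 * t + k - 1)) * r ^ ((2 * s - t) * (2 * s - t - 1)) =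
      r ^ ((k : ℤ) * (k - 1)) * r ^ (5 * (s * (s - 1))) * r ^ ((2 + 2 * (k : ℤ)) * s) *
        r ^ (5 * (t * (t - 1))) * r ^ ((4 + 4 * (k : ℤ)) * t) := by
    simp only [← zpow_add₀ hr]
    congr 1
    ring
  simp only [e, Equiv.coe_fn_mk]
  rw [h1, h2, h3, h3, h0, zpow_add₀ hx, zpow_add₀ hx, sub_eq_add_neg (2 * s) t, zpow_add₀ hy,
    ← sub_eq_add_neg, zpow_natCast]
  linear_combination (x ^ s * x ^ (2 * t) * x ^ k * y ^ (2 * s) * y ^ (-t)) * h4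

/-- Weierstrass' three-term relation, for `j(z) = theta r (-z)`. Up to the factor `1 / y`, the
product `j(xy) j(x/y)` is the determinant `F(x) K(y) - K(x) F(y)` with `F(z) = theta (r²) (z²)` and
`K(z) = z theta (r²) (r² z²)`, so this is a Plücker relation. -/
lemma weierstrass {r x y u v : ℂ} (hr : r ≠ 0) (hr1 : ‖r‖ < 1) (hx : x ≠ 0) (hy : y ≠ 0)
    (hu : u ≠ 0) (hv : v ≠ 0) :
    theta r (-(x * y)) * theta r (-(x / y)) * (theta r (-(u * v)) * theta r (-(u / v))) -
      theta r (-(x * v)) * theta r (-(x / v)) * (theta r (-(u * y)) * theta r (-(u / y))) =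
    u / y * (theta r (-(y * v)) * theta r (-(y / v)) *
      (theta r (-(x * u)) * theta r (-(x / u)))) := by
  have key : ∀ a b : ℂ, a ≠ 0 → b ≠ 0 → theta r (-(a * b)) * theta r (-(a / b)) =
      theta (r ^ 2) (a ^ 2) * theta (r ^ 2) (r ^ 2 * b ^ 2) -
        a / b * (theta (r ^ 2) (r ^ 2 * a ^ 2) * theta (r ^ 2) (b ^ 2)) := by
    intro a b ha hb
    rw [theta_mul_two hr hr1 (neg_ne_zero.2 (mul_ne_zero ha hb)) (neg_ne_zero.2 (div_ne_zero ha hb)),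
      show -(a * b) * -(a / b) = a ^ 2 by field_simp,
      show -(a * b) / -(a / b) = b ^ 2 by field_simp]
    ring
  rw [key x y hx hy, key u v hu hv, key x v hx hv, key u y hu hy, key y v hy hv, key x u hx hu]
  field_simp
  ring

/-! ### The theta values at powers of `p` for the base `p ^ 5` -/

/-- The symmetry of the triple product under exchange of its two factors depending on `x`. -/
lemma theta_inv {r x : ℂ} (hr : r ≠ 0) (hr1 : ‖r‖ < 1) (hx : x ≠ 0) :
    theta r (r ^ 2 / x) = theta r x := by
  have h2 : r ^ 2 ≠ 0 := pow_ne_zero _ hr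
  rw [theta_eq_prod hr hr1 hx, theta_eq_prod hr hr1 (div_ne_zero h2 hx),
    show -(r ^ 2) / (r ^ 2 / x) = -x by field_simp, neg_div, mul_comm (qp (-x) _)]

/-- Symmetries of the theta function of base `p ^ 5 = R ^ 2`; they reduce its values at `± p ^ n` to
those with `n = 0, 1, 2`. -/
lemma theta_values {R p : ℂ} (hp : p ≠ 0) (hR1 : ‖R‖ < 1) (hR : R ^ 2 = p ^ 5) :
    (∀ x, x ≠ 0 → theta R (p ^ 5 * x) = theta R x / x) ∧
    (∀ x, x ≠ 0 → theta R (p ^ 5 / x) = theta R x) ∧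
    (∀ x, x ≠ 0 → theta R x⁻¹ = theta R x / x) := by
  have hR0 : R ≠ 0 := by
    rintro rfl
    exact pow_ne_zero 5 hp (by rw [← hR]; norm_num)
  have h1 : ∀ x, x ≠ 0 → theta R (p ^ 5 * x) = theta R x / x := fun x hx => by
    rw [← hR, theta_shift hR0 hx]
  have h2 : ∀ x, x ≠ 0 → theta R (p ^ 5 / x) = theta R x := fun x hx => by
    rw [← hR, theta_inv hR0 hR1 hx]
  refine ⟨h1, h2, fun x hx => ?_⟩
  have h := h1 x⁻¹ (inv_ne_zero hx)
  rw [← div_eq_mul_inv, h2 x hx] at h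
  rw [h]
  field_simp

/-- Three instances of Weierstrass' relation at powers of `p`, simplified by `theta_values`. -/
lemma three_term {R p : ℂ} (hp : p ≠ 0) (hR1 : ‖R‖ < 1) (hR : R ^ 2 = p ^ 5) :
    theta R (p ^ 2) ^ 3 * theta R p - p * theta R p ^ 3 * theta R 1 =
      theta R (-p ^ 2) ^ 3 * theta R (-p) ∧
    theta R (p ^ 2) ^ 2 * theta R p ^ 2 - p * theta R (p ^ 2) * theta R p * theta R 1 ^ 2 =
      theta R (-p ^ 2) ^ 2 * theta R (-p) ^ 2 ∧
    theta R (p ^ 2) ^ 3 * theta R 1 - theta R (p ^ 2) * theta R p ^ 3 =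
      theta R (-p ^ 2) * theta R (-p) ^ 3 := by
  obtain ⟨hs, hc, hi⟩ := theta_values hp hR1 hR
  have hR0 : R ≠ 0 := by
    rintro rfl
    exact pow_ne_zero 5 hp (by rw [← hR]; norm_num)
  have p2 : p ^ 2 ≠ 0 := pow_ne_zero _ hp
  have p3 : theta R (p ^ 3) = theta R (p ^ 2) := by
    rw [← hc _ p2]; congr 1; field_simp
  have p4 : theta R (p ^ 4) = theta R p := by rw [← hc _ hp]; congr 1; field_simp
  have p5 : theta R (p ^ 5) = theta R 1 := by simpa using hs 1 one_ne_zero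
  have p6 : theta R (p ^ 6) = theta R p / p := by rw [← hs _ hp]; congr 1
  have m1 : theta R p⁻¹ = theta R p / p := hi _ hp
  have m2 : theta R (p ^ 2)⁻¹ = theta R (p ^ 2) / p ^ 2 := hi _ p2
  have m4 : theta R (p ^ 4)⁻¹ = theta R p / p ^ 4 := by rw [hi _ (pow_ne_zero _ hp), p4]
  have n3 : theta R (-p ^ 3) = theta R (-p ^ 2) := by
    rw [← hc _ (neg_ne_zero.2 p2)]; congr 1; field_simp
  have n4 : theta R (-p ^ 4) = theta R (-p) := by
    rw [← hc _ (neg_ne_zero.2 hp)]; congr 1; field_simp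
  have k1 : theta R (-p⁻¹) = -theta R (-p) / p := by
    rw [← inv_neg, hi _ (neg_ne_zero.2 hp)]; field_simp
  have k3 : theta R (-(p ^ 3)⁻¹) = -theta R (-p ^ 2) / p ^ 3 := by
    rw [← inv_neg, hi _ (neg_ne_zero.2 (pow_ne_zero _ hp)), n3]; field_simp
  have k4 : theta R (-(p ^ 4)⁻¹) = -theta R (-p) / p ^ 4 := by
    rw [← inv_neg, hi _ (neg_ne_zero.2 (pow_ne_zero _ hp)), n4]; field_simp
  have pi : p⁻¹ ≠ 0 := inv_ne_zero hp
  refine ⟨?_, ?_, ?_⟩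
  · have h := weierstrass hR0 hR1 one_ne_zero (neg_ne_zero.2 p2) (pow_ne_zero 3 hp)
      (neg_ne_zero.2 pi)
    rw [show -(1 * -p ^ 2) = p ^ 2 by ring, show -(1 / -p ^ 2) = (p ^ 2)⁻¹ by field_simp,
      show -(p ^ 3 * -p⁻¹) = p ^ 2 by field_simp, show -(p ^ 3 / -p⁻¹) = p ^ 4 by field_simp,
      show -(1 * -p⁻¹) = p⁻¹ by ring, show -(1 / -p⁻¹) = p by field_simp,
      show -(p ^ 3 * -p ^ 2) = p ^ 5 by ring, show -(p ^ 3 / -p ^ 2) = p by field_simp,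
      show -(-p ^ 2 * -p⁻¹) = -p by field_simp, show -(-p ^ 2 / -p⁻¹) = -p ^ 3 by field_simp,
      show -(1 * p ^ 3) = -p ^ 3 by ring, show -(1 / p ^ 3) = -(p ^ 3)⁻¹ by field_simp,
      m2, p4, m1, p5, n3, k3] at h
    field_simp at h
    linear_combination h
  · have h := weierstrass hR0 hR1 (pow_ne_zero 3 hp) (neg_ne_zero.2 pi) pi
      (neg_ne_zero.2 (pow_ne_zero 3 hp))
    rw [show -(p ^ 3 * -p⁻¹) = p ^ 2 by field_simp, show -(p ^ 3 / -p⁻¹) = p ^ 4 by field_simp,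
      show -(p⁻¹ * -p ^ 3) = p ^ 2 by field_simp, show -(p⁻¹ / -p ^ 3) = (p ^ 4)⁻¹ by field_simp,
      show -(p ^ 3 * -p ^ 3) = p ^ 6 by ring, show -(p ^ 3 / -p ^ 3) = 1 by field_simp,
      show -(p⁻¹ * -p⁻¹) = (p ^ 2)⁻¹ by field_simp, show -(p⁻¹ / -p⁻¹) = 1 by field_simp,
      show -(-p⁻¹ * -p ^ 3) = -p ^ 2 by field_simp,
      show -(-p⁻¹ / -p ^ 3) = -(p ^ 4)⁻¹ by field_simp,
      show -(p ^ 3 * p⁻¹) = -p ^ 2 by field_simp, show -(p ^ 3 / p⁻¹) = -p ^ 4 by field_simp,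
      p4, m4, p6, m2, k4, n4] at h
    field_simp at h
    linear_combination h
  · have h := weierstrass hR0 hR1 one_ne_zero (neg_ne_zero.2 p2) hp (neg_ne_zero.2 pi)
    rw [show -(1 * -p ^ 2) = p ^ 2 by ring, show -(1 / -p ^ 2) = (p ^ 2)⁻¹ by field_simp,
      show -(p * -p⁻¹) = 1 by field_simp, show -(p / -p⁻¹) = p ^ 2 by field_simp,
      show -(1 * -p⁻¹) = p⁻¹ by ring, show -(1 / -p⁻¹) = p by field_simp,
      show -(p * -p ^ 2) = p ^ 3 by ring, show -(p / -p ^ 2) = p⁻¹ by field_simp,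
      show -(-p ^ 2 * -p⁻¹) = -p by field_simp, show -(-p ^ 2 / -p⁻¹) = -p ^ 3 by field_simp,
      show -(1 * p) = -p by ring, show -(1 / p) = -p⁻¹ by field_simp,
      m2, m1, p3, n3, k1] at h
    field_simp at h
    linear_combination h

/-- Five-dissections of `f(q, q⁴) f(q², q³)` and of `f(q, q⁴) f(-q², -q³)`; in the second one the
class of `q ^ 4` is missing because its coefficient contains the factor `f(-1, -q²⁵) = 0`. -/
lemma dissections {r q : ℂ} (hq : q ≠ 0) (hr1 : ‖r‖ < 1) (hr : r ^ 2 = q ^ 5) :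
    theta r q * theta r (q ^ 2) =
      theta (r ^ 5) ((q ^ 5) ^ 2) ^ 2 + q * theta (r ^ 5) ((q ^ 5) ^ 2) * theta (r ^ 5) (q ^ 5) +
        q ^ 2 * theta (r ^ 5) (q ^ 5) ^ 2 +
        q ^ 3 * theta (r ^ 5) 1 * theta (r ^ 5) ((q ^ 5) ^ 2) +
        q ^ 4 * theta (r ^ 5) 1 * theta (r ^ 5) (q ^ 5) ∧
    theta r q * theta r (-q ^ 2) =
      theta (r ^ 5) ((q ^ 5) ^ 2) * theta (r ^ 5) (-(q ^ 5) ^ 2) +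
        q * theta (r ^ 5) ((q ^ 5) ^ 2) * theta (r ^ 5) (-q ^ 5) -
        q ^ 2 * theta (r ^ 5) (q ^ 5) * theta (r ^ 5) (-q ^ 5) -
        q ^ 3 * theta (r ^ 5) 1 * theta (r ^ 5) (-(q ^ 5) ^ 2) := by
  have hr0 : r ≠ 0 := by
    rintro rfl
    exact pow_ne_zero 5 hq (by rw [← hr]; norm_num)
  have hq2 : q ^ 2 ≠ 0 := pow_ne_zero _ hq
  have hR1 : ‖r ^ 5‖ < 1 := by
    rw [norm_pow]; exact pow_lt_one₀ (norm_nonneg _) hr1 (by norm_num)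
  obtain ⟨p, hpq⟩ : ∃ p, p = q ^ 5 := ⟨_, rfl⟩
  have hp : p ≠ 0 := hpq ▸ pow_ne_zero _ hq
  have hrp : r ^ 2 = p := hr.trans hpq.symm
  obtain ⟨hs, hc, hi⟩ := theta_values hp hR1 (by rw [← hrp]; ring)
  have p3 : theta (r ^ 5) (p ^ 3) = theta (r ^ 5) (p ^ 2) := by
    rw [← hc _ (pow_ne_zero 2 hp)]; congr 1; field_simp
  have p4 : theta (r ^ 5) (p ^ 4) = theta (r ^ 5) p := by rw [← hc _ hp]; congr 1; field_simp
  have p5 : theta (r ^ 5) (p ^ 5) = theta (r ^ 5) 1 := by simpa using hs 1 one_ne_zero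
  have p6 : theta (r ^ 5) (p ^ 6) = theta (r ^ 5) p / p := by rw [← hs _ hp]; congr 1
  have p8 : theta (r ^ 5) (p ^ 8) = theta (r ^ 5) (p ^ 2) / p ^ 3 := by
    rw [← p3, ← hs _ (pow_ne_zero 3 hp)]; congr 1; ring
  have p10 : theta (r ^ 5) (p ^ 10) = theta (r ^ 5) 1 / p ^ 5 := by
    rw [← p5, ← hs _ (pow_ne_zero 5 hp)]; congr 1; ring
  have n3 : theta (r ^ 5) (-p ^ 3) = theta (r ^ 5) (-p ^ 2) := by
    rw [← hc _ (neg_ne_zero.2 (pow_ne_zero 2 hp))]; congr 1; field_simp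
  have n4 : theta (r ^ 5) (-p ^ 4) = theta (r ^ 5) (-p) := by
    rw [← hc _ (neg_ne_zero.2 hp)]; congr 1; field_simp
  have n6 : theta (r ^ 5) (-p ^ 6) = theta (r ^ 5) (-p) / -p := by
    rw [← hs _ (neg_ne_zero.2 hp)]; congr 1; ring
  have n8 : theta (r ^ 5) (-p ^ 8) = theta (r ^ 5) (-p ^ 2) / -p ^ 3 := by
    rw [← n3, ← hs _ (neg_ne_zero.2 (pow_ne_zero 3 hp))]; congr 1; ring
  have n0 : theta (r ^ 5) (-1) = 0 := by
    have h := hi (-1) (by norm_num)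
    rw [inv_neg, inv_one, div_neg, div_one] at h
    linear_combination h / 2
  have n10 : theta (r ^ 5) (-p ^ 10) = 0 := by
    rw [show -p ^ 10 = p ^ 5 * (p ^ 5 * (-1)) by ring,
      hs _ (mul_ne_zero (pow_ne_zero 5 hp) (by norm_num)), hs _ (by norm_num), n0]
    simp
  have hre : ∀ n : ℕ, r ^ (2 * n) = p ^ n := fun n => by rw [pow_mul, hrp]
  have e2 : r ^ 2 = p ^ 1 := hre 1
  have e4 : r ^ 4 = p ^ 2 := hre 2
  have e6 : r ^ 6 = p ^ 3 := hre 3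
  have e8 : r ^ 8 = p ^ 4 := hre 4
  have e10 : r ^ 10 = p ^ 5 := hre 5
  have e12 : r ^ 12 = p ^ 6 := hre 6
  have e16 : r ^ 16 = p ^ 8 := hre 8
  have e20 : r ^ 20 = p ^ 10 := hre 10
  have hy : q * (q ^ 2) ^ 2 = p := by rw [hpq]; ring
  have hy' : q * (-q ^ 2) ^ 2 = p := by rw [hpq]; ring
  have hz : q ^ 2 * (q ^ 2)⁻¹ = 1 := by field_simp
  have hz' : q ^ 2 * (-q ^ 2)⁻¹ = -1 := by field_simp
  have g : ∀ n : ℕ, p * p ^ n = p ^ (n + 1) := fun n => by ring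
  rw [← hpq, theta_mul_five hr0 hr1 hq hq2, theta_mul_five hr0 hr1 hq (neg_ne_zero.2 hq2)]
  simp only [Fin.sum_univ_five, hy, hy', hz, hz']
  norm_num [e2, e4, e6, e8, e10, e12, e16, e20, g]
  simp only [p3, p4, p5, p6, p8, p10, n4, n6, n8, n10, ← pow_two p]
  constructor
  · field_simp
  · field_simp
    ring

/-! ### The Rogers–Ramanujan functions -/

lemma HH_GG_zero : GG 0 = 1 ∧ HH 0 = 1 := by
  have h : ∀ p, qp 0 p = 1 := fun p => by simp [qp]
  constructor <;> simp [GG, HH, h]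

theorem stmt15 (q : ℂ) (hq : ‖q‖ < 1) :
    GG q ^ 2 / (GG (q ^ 2) ^ 2 * HH (q ^ 2)) =
      GG (q ^ 5) ^ 2 * GG (q ^ 10) + 2 * q * GG (q ^ 5) * HH (q ^ 5) * GG (q ^ 10) +
        q ^ 2 * GG (q ^ 5) ^ 2 * HH (q ^ 10) + q ^ 4 * HH (q ^ 5) ^ 2 * HH (q ^ 10) := by
  rcases eq_or_ne q 0 with rfl | hq0
  · simp [HH_GG_zero.1, HH_GG_zero.2]
  have hn : ∀ {a : ℂ}, ‖a‖ < 1 → ∀ n : ℕ, n ≠ 0 → ‖a ^ n‖ < 1 := fun ha n h0 => by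
    rw [norm_pow]; exact pow_lt_one₀ (norm_nonneg _) ha h0
  -- a square root `r` of the base `q ^ 5`
  obtain ⟨ρ, hρ⟩ := IsAlgClosed.exists_pow_nat_eq q (n := 2) (by norm_num)
  have hρ1 : ‖ρ‖ < 1 := by
    by_contra! h
    have : 1 ≤ ‖ρ ^ 2‖ := by rw [norm_pow]; exact one_le_pow₀ h
    rw [hρ] at this
    linarith
  obtain ⟨r, hr⟩ : ∃ r, r = ρ ^ 5 := ⟨_, rfl⟩
  have hr1 : ‖r‖ < 1 := hr ▸ hn hρ1 5 (by norm_num)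
  have hr2 : r ^ 2 = q ^ 5 := by rw [hr, ← hρ]; ring
  have hr0 : r ≠ 0 := by
    rintro rfl
    exact pow_ne_zero 5 hq0 (by rw [← hr2]; norm_num)
  obtain ⟨p, hp⟩ : ∃ p, p = q ^ 5 := ⟨_, rfl⟩
  have hp0 : p ≠ 0 := hp ▸ pow_ne_zero 5 hq0
  have hp1 : ‖p‖ < 1 := hp ▸ hn hq 5 (by norm_num)
  have hR1 : ‖r ^ 5‖ < 1 := hn hr1 5 (by norm_num)
  have hR0 : r ^ 5 ≠ 0 := pow_ne_zero _ hr0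
  have hR2 : (r ^ 5) ^ 2 = p ^ 5 := by rw [hp, ← hr2]; ring
  have hP1 : ‖p ^ 5‖ < 1 := hn hp1 5 (by norm_num)
  obtain ⟨I0, I1, I4⟩ := three_term hp0 hR1 hR2
  obtain ⟨D1, D2⟩ := dissections hq0 hr1 hr2
  rw [← hp] at D1 D2 hr2
  have nz : ∀ {a b : ℂ}, ‖a‖ < 1 → ‖b‖ < 1 → qp a b ≠ 0 := fun ha hb => qp_ne_zero_of_norm_lt hb ha
  have nn : ∀ {a : ℂ}, ‖a‖ < 1 → ‖-a‖ < 1 := fun h => by rwa [norm_neg]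
  -- all theta functions as products
  have T1 : theta r q = qp p p * (qp (-q) p * qp (-q ^ 4) p) := by
    rw [theta_eq_prod hr0 hr1 hq0, hr2, show -p / q = -q ^ 4 by rw [hp]; field_simp]
  have T2 : theta r (q ^ 2) = qp p p * (qp (-q ^ 2) p * qp (-q ^ 3) p) := by
    rw [theta_eq_prod hr0 hr1 (pow_ne_zero 2 hq0), hr2,
      show -p / q ^ 2 = -q ^ 3 by rw [hp]; field_simp]
  have T3 : theta r (-q ^ 2) = qp p p * (qp (q ^ 2) p * qp (q ^ 3) p) := by
    rw [theta_eq_prod hr0 hr1 (neg_ne_zero.2 (pow_ne_zero 2 hq0)), hr2,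
      show -p / -q ^ 2 = q ^ 3 by rw [hp]; field_simp, neg_neg]
  have TA : theta (r ^ 5) (p ^ 2) =
      qp (p ^ 5) (p ^ 5) * (qp (-p ^ 2) (p ^ 5) * qp (-p ^ 3) (p ^ 5)) := by
    rw [theta_eq_prod hR0 hR1 (pow_ne_zero 2 hp0), hR2,
      show -p ^ 5 / p ^ 2 = -p ^ 3 by field_simp]
  have TB : theta (r ^ 5) p =
      qp (p ^ 5) (p ^ 5) * (qp (-p) (p ^ 5) * qp (-p ^ 4) (p ^ 5)) := by
    rw [theta_eq_prod hR0 hR1 hp0, hR2, show -p ^ 5 / p = -p ^ 4 by field_simp]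
  have TA' : theta (r ^ 5) (-p ^ 2) =
      qp (p ^ 5) (p ^ 5) * (qp (p ^ 2) (p ^ 5) * qp (p ^ 3) (p ^ 5)) := by
    rw [theta_eq_prod hR0 hR1 (neg_ne_zero.2 (pow_ne_zero 2 hp0)), hR2,
      show -p ^ 5 / -p ^ 2 = p ^ 3 by field_simp, neg_neg]
  have TB' : theta (r ^ 5) (-p) =
      qp (p ^ 5) (p ^ 5) * (qp p (p ^ 5) * qp (p ^ 4) (p ^ 5)) := by
    rw [theta_eq_prod hR0 hR1 (neg_ne_zero.2 hp0), hR2,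
      show -p ^ 5 / -p = p ^ 4 by field_simp, neg_neg]
  have hC : qp (p ^ 5) (p ^ 5) ≠ 0 := nz hP1 hP1
  have hc : qp p p ≠ 0 := nz hp1 hp1
  have hA : theta (r ^ 5) (p ^ 2) ≠ 0 := by
    rw [TA]
    exact mul_ne_zero hC (mul_ne_zero (nz (nn (hn hp1 2 (by norm_num))) hP1)
      (nz (nn (hn hp1 3 (by norm_num))) hP1))
  have hB : theta (r ^ 5) p ≠ 0 := by
    rw [TB]
    exact mul_ne_zero hC (mul_ne_zero (nz (nn hp1) hP1)
      (nz (nn (hn hp1 4 (by norm_num))) hP1))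
  have hA' : theta (r ^ 5) (-p ^ 2) ≠ 0 := by
    rw [TA']
    exact mul_ne_zero hC (mul_ne_zero (nz (hn hp1 2 (by norm_num)) hP1)
      (nz (hn hp1 3 (by norm_num)) hP1))
  have hB' : theta (r ^ 5) (-p) ≠ 0 := by
    rw [TB']
    exact mul_ne_zero hC (mul_ne_zero (nz hp1 hP1) (nz (hn hp1 4 (by norm_num)) hP1))
  have hcC : qp p p * qp (p ^ 5) (p ^ 5) = theta (r ^ 5) (-p ^ 2) * theta (r ^ 5) (-p) := by
    rw [TA', TB', qp_five p hp1]
    ring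
  have hG5 : GG p = qp (p ^ 5) (p ^ 5) / theta (r ^ 5) (-p) := by
    rw [GG, TB', div_mul_cancel_left₀ hC, one_div]
  have hH5 : HH p = qp (p ^ 5) (p ^ 5) / theta (r ^ 5) (-p ^ 2) := by
    rw [HH, TA', div_mul_cancel_left₀ hC, one_div]
  have hG10 : GG (p ^ 2) = qp (p ^ 5) (p ^ 5) ^ 2 / (theta (r ^ 5) p * theta (r ^ 5) (-p)) := by
    rw [GG, show ((p ^ 2) ^ 5 : ℂ) = (p ^ 5) ^ 2 by ring, show ((p ^ 2) ^ 4 : ℂ) = (p ^ 4) ^ 2 by ring,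
      qp_sq p hP1, qp_sq (p ^ 4) hP1, eq_div_iff (mul_ne_zero hB hB'), one_div_mul_eq_div,
      div_eq_iff, TB, TB']
    · ring
    · have := nz hp1 hP1
      have := nz (nn hp1) hP1
      have := nz (hn hp1 4 (by norm_num)) hP1
      have := nz (nn (hn hp1 4 (by norm_num))) hP1
      positivity
  have hH10 : HH (p ^ 2) =
      qp (p ^ 5) (p ^ 5) ^ 2 / (theta (r ^ 5) (p ^ 2) * theta (r ^ 5) (-p ^ 2)) := by
    rw [HH, show ((p ^ 2) ^ 5 : ℂ) = (p ^ 5) ^ 2 by ring, show ((p ^ 2) ^ 3 : ℂ) = (p ^ 3) ^ 2 by ring,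
      qp_sq (p ^ 2) hP1, qp_sq (p ^ 3) hP1, eq_div_iff (mul_ne_zero hA hA'), one_div_mul_eq_div,
      div_eq_iff, TA, TA']
    · ring
    · have := nz (hn hp1 2 (by norm_num)) hP1
      have := nz (nn (hn hp1 2 (by norm_num))) hP1
      have := nz (hn hp1 3 (by norm_num)) hP1
      have := nz (nn (hn hp1 3 (by norm_num))) hP1
      positivity
  -- the left side has no denominator: it is a product of four theta functions of base `q ^ 5`
  have hL : GG q ^ 2 / (GG (q ^ 2) ^ 2 * HH (q ^ 2)) =
      (theta r q * theta r (q ^ 2)) * (theta r q * theta r (-q ^ 2)) / qp p p ^ 4 := by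
    have h1 := nz hq hp1
    have h4 := nz (hn hq 4 (by norm_num)) hp1
    rw [GG, GG, HH, show ((q ^ 2) ^ 5 : ℂ) = p ^ 2 by rw [hp]; ring,
      show ((q ^ 2) ^ 4 : ℂ) = (q ^ 4) ^ 2 by ring, show ((q ^ 2) ^ 3 : ℂ) = (q ^ 3) ^ 2 by ring,
      ← hp, qp_sq q hp1, qp_sq (q ^ 4) hp1, qp_sq (q ^ 2) hp1, qp_sq (q ^ 3) hp1, T1, T2, T3]
    simp only [div_eq_mul_inv, mul_inv, inv_inv]
    field_simp
  have hc' : qp p p = theta (r ^ 5) (-p ^ 2) * theta (r ^ 5) (-p) / qp (p ^ 5) (p ^ 5) := by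
    rw [← hcC]; field_simp
  rw [hL, D1, D2, show q ^ 10 = p ^ 2 by rw [hp]; ring, ← hp, hG5, hH5, hG10, hH10, hc']
  generalize theta (r ^ 5) (p ^ 2) = A at *
  generalize theta (r ^ 5) p = B at *
  generalize theta (r ^ 5) (-p ^ 2) = A' at *
  generalize theta (r ^ 5) (-p) = B' at *
  generalize theta (r ^ 5) 1 = T at *
  field_simp
  rw [hp] at I0 I1
  -- the terms are the classes 0, 1, 2, 4 of exponents of `q` modulo 5; class 3 cancels by itself
  linear_combination A * A' * I0 + q * (A * A' * I1 + A * B' * I0) + q ^ 2 * B * A' * I1 +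
    q ^ 4 * B * B' * I4
end

section
/- For |q|<1, H(q)^2/(G(q^2)·H(q^2)^2) = G(q^5)^2·G(q^{10}) + q^2·H(q^5)^2·G(q^{10}) + 2q^3·G(q^5)·H(q^5)·H(q^{10}) − q^4·H(q^5)^2·H(q^{10}). -/
open Filter Topology

/-! ### Infinite products -/

lemma qp_summable (a : ℂ) {Q : ℂ} (hQ : ‖Q‖ < 1) : Summable fun k : ℕ => ‖-(a * Q ^ k)‖ := by
  simpa [norm_mul, norm_pow] using
    (summable_geometric_of_lt_one (norm_nonneg Q) hQ).mul_left ‖a‖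

lemma qp_tendsto (a : ℂ) {Q : ℂ} (hQ : ‖Q‖ < 1) :
    Tendsto (fun N => ∏ k ∈ Finset.range N, (1 - a * Q ^ k)) atTop (𝓝 (qp a Q)) := by
  have h := multipliable_one_add_of_summable (qp_summable a hQ)
  simpa [qp, sub_eq_add_neg] using h.tendsto_prod_tprod_nat

lemma qp_ne_zero_s16 {a Q : ℂ} (hQ : ‖Q‖ < 1) (ha : ‖a‖ < 1) : qp a Q ≠ 0 := by
  have h := tprod_one_add_ne_zero_of_summable (f := fun k : ℕ => -(a * Q ^ k)) ?_
    (qp_summable a hQ)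
  · simpa [qp, sub_eq_add_neg] using h
  · intro k h0
    have h1 : a * Q ^ k = 1 := by linear_combination -h0
    have h2 : ‖a * Q ^ k‖ < 1 := by
      rw [norm_mul, norm_pow]
      exact mul_lt_one_of_nonneg_of_lt_one_left (norm_nonneg _) ha
        (pow_le_one₀ (norm_nonneg _) hQ.le)
    rw [h1] at h2
    simp at h2

lemma norm_pow_lt_one {q : ℂ} (hq : ‖q‖ < 1) {n : ℕ} (hn : n ≠ 0) : ‖q ^ n‖ < 1 := by
  rw [norm_pow]
  exact pow_lt_one₀ (norm_nonneg _) hq hn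

/-- Splitting an infinite product over the residues of the index modulo `2`. -/
lemma qp_split_two (a : ℂ) {Q : ℂ} (hQ : ‖Q‖ < 1) :
    qp a Q = qp a (Q ^ 2) * qp (a * Q) (Q ^ 2) := by
  have hQ2 := norm_pow_lt_one hQ two_ne_zero
  have h1 := (qp_tendsto a hQ).comp (tendsto_id.const_mul_atTop' (r := 2) (by norm_num))
  refine tendsto_nhds_unique h1 (((qp_tendsto a hQ2).mul (qp_tendsto (a * Q) hQ2)).congr ?_)
  intro N
  induction N with
  | zero => simp
  | succ N ih =>
    simp only [Function.comp, id] at ih ⊢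
    rw [show 2 * (N + 1) = 2 * N + 1 + 1 by ring]
    simp only [Finset.prod_range_succ] at ih ⊢
    rw [← ih]
    ring

/-- Splitting Euler's product over the residues of the index modulo `5`. -/
lemma qp_split_five {q : ℂ} (hq : ‖q‖ < 1) :
    qp q q = qp q (q ^ 5) * qp (q ^ 2) (q ^ 5) * qp (q ^ 3) (q ^ 5) * qp (q ^ 4) (q ^ 5) *
      qp (q ^ 5) (q ^ 5) := by
  have h5 := norm_pow_lt_one hq (n := 5) (by norm_num)
  have h1 := (qp_tendsto q hq).comp (tendsto_id.const_mul_atTop' (r := 5) (by norm_num))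
  refine tendsto_nhds_unique h1 ((((((qp_tendsto q h5).mul (qp_tendsto (q ^ 2) h5)).mul
    (qp_tendsto (q ^ 3) h5)).mul (qp_tendsto (q ^ 4) h5)).mul
    (qp_tendsto (q ^ 5) h5)).congr ?_)
  intro N
  induction N with
  | zero => simp
  | succ N ih =>
    simp only [Function.comp, id] at ih ⊢
    rw [show 5 * (N + 1) = 5 * N + 1 + 1 + 1 + 1 + 1 by ring]
    simp only [Finset.prod_range_succ] at ih ⊢
    rw [← ih]
    ring

lemma qp_neg_mul (a : ℂ) {Q : ℂ} (hQ : ‖Q‖ < 1) :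
    qp (-a) Q * qp a Q = qp (a ^ 2) (Q ^ 2) := by
  have hQ2 := norm_pow_lt_one hQ two_ne_zero
  refine tendsto_nhds_unique ((qp_tendsto (-a) hQ).mul (qp_tendsto a hQ))
    ((qp_tendsto (a ^ 2) hQ2).congr ?_)
  intro N
  rw [← Finset.prod_mul_distrib]
  refine Finset.prod_congr rfl fun k _ => ?_
  ring

/-- Splitting off the first factor. -/
lemma qp_shift (a : ℂ) {Q : ℂ} (hQ : ‖Q‖ < 1) : qp a Q = (1 - a) * qp (a * Q) Q := by
  refine tendsto_nhds_unique ((qp_tendsto a hQ).comp (tendsto_add_atTop_nat 1))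
    (((qp_tendsto (a * Q) hQ).const_mul (1 - a)).congr ?_)
  intro N
  simp only [Function.comp, Finset.prod_range_succ', pow_zero, mul_one]
  rw [mul_comm]
  congr 1
  refine Finset.prod_congr rfl fun k _ => ?_
  ring

/-! ### The Jacobi triple product -/

/-- The binomial coefficient `n (n - 1) / 2` for an integer `n`; the division is exact. -/
def ch (n : ℤ) : ℤ := n * (n - 1) / 2

lemma two_mul_ch (n : ℤ) : 2 * ch n = n * (n - 1) := by
  have h : (2 : ℤ) ∣ n * (n - 1) := (Int.even_mul_pred_self n).two_dvd
  exact Int.mul_ediv_cancel' h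

lemma ch_add_one (n : ℤ) : ch (n + 1) = ch n + n := by
  have h1 := two_mul_ch n
  have h2 := two_mul_ch (n + 1)
  have : 2 * ch (n + 1) = 2 * (ch n + n) := by linear_combination h2 - h1
  omega

lemma ch_sub_one (n : ℤ) : ch (n - 1) = ch n - (n - 1) := by
  have := ch_add_one (n - 1)
  rw [sub_add_cancel] at this
  omega

lemma ch_neg (n : ℤ) : ch (-n) = ch n + n := by
  have h1 := two_mul_ch n
  have h2 := two_mul_ch (-n)
  have : 2 * ch (-n) = 2 * (ch n + n) := by linear_combination h2 - h1
  omega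

lemma ch_zero : ch 0 = 0 := rfl

lemma summable_nat_aux {r c : ℝ} (hr0 : 0 < r) (hr : r < 1) (f : ℕ → ℝ) (hf : ∀ n, 0 < f n)
    (h : ∀ n, f (n + 1) = f n * (c * r ^ n)) : Summable f := by
  refine summable_of_ratio_test_tendsto_lt_one (l := 0) one_pos
    (Eventually.of_forall fun n => (hf n).ne') ?_
  have h0 : Tendsto (fun n : ℕ => c * r ^ n) atTop (𝓝 (c * 0)) :=
    (tendsto_pow_atTop_nhds_zero_of_lt_one hr0.le hr).const_mul c
  rw [mul_zero] at h0
  refine h0.congr fun n => ?_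
  rw [Real.norm_of_nonneg (hf _).le, Real.norm_of_nonneg (hf _).le, h n]
  field_simp [(hf n).ne']

lemma summable_real_theta {a r : ℝ} (ha : 0 < a) (hr0 : 0 < r) (hr : r < 1) :
    Summable fun n : ℤ => a ^ n * r ^ ch n := by
  refine Summable.of_nat_of_neg ?_ ?_
  · refine summable_nat_aux hr0 hr (c := a) _ (fun n => by positivity) fun n => ?_
    push_cast
    rw [ch_add_one, zpow_add₀ ha.ne', zpow_add₀ hr0.ne', zpow_one, zpow_natCast, zpow_natCast]
    ring
  · refine summable_nat_aux hr0 hr (c := a⁻¹ * r) _ (fun n => by positivity) fun n => ?_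
    push_cast
    rw [show -((n : ℤ) + 1) = -n - 1 by ring, ch_sub_one, zpow_sub₀ ha.ne', zpow_one,
      show ch (-(n : ℤ)) - (-n - 1) = ch (-(n : ℤ)) + n + 1 by ring, zpow_add₀ hr0.ne',
      zpow_add₀ hr0.ne', zpow_one, zpow_natCast]
    ring

lemma summable_norm_theta_s16 {x Q : ℂ} (hx : x ≠ 0) (hQ0 : Q ≠ 0) (hQ : ‖Q‖ < 1) :
    Summable fun n : ℤ => ‖x ^ n * Q ^ ch n‖ := by
  simpa [norm_mul, norm_zpow] using
    summable_real_theta (norm_pos_iff.mpr hx) (norm_pos_iff.mpr hQ0) hQ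

/-- The reciprocal of `(Q; Q)_k` for `k : ℤ`, with the value `0` at negative `k`, so that
`rq (k - 1) = (1 - Q ^ k) * rq k` holds for every integer `k`. -/
noncomputable def rq (Q : ℂ) : ℤ → ℂ
  | Int.ofNat n => (∏ i ∈ Finset.range n, (1 - Q * Q ^ i))⁻¹
  | Int.negSucc _ => 0

lemma one_sub_ne_zero {Q : ℂ} (hQ : ‖Q‖ < 1) (i : ℕ) : 1 - Q * Q ^ i ≠ 0 := by
  intro h
  have h2 := norm_pow_lt_one hQ (Nat.succ_ne_zero i)
  rw [pow_succ', ← sub_eq_zero.mp h] at h2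
  simp at h2

lemma rq_sub_one {Q : ℂ} (hQ : ‖Q‖ < 1) (k : ℤ) : rq Q (k - 1) = (1 - Q ^ k) * rq Q k := by
  rcases k with n | n
  · rcases n with _ | n
    · change rq Q (Int.negSucc 0) = (1 - Q ^ (0 : ℤ)) * rq Q 0
      simp [rq]
    · have h : (Int.ofNat (n + 1) - 1 : ℤ) = Int.ofNat n := by simp
      rw [h]
      simp only [rq, Finset.prod_range_succ]
      have := one_sub_ne_zero hQ n
      have h2 : Q ^ (Int.ofNat (n + 1)) = Q * Q ^ n := by
        rw [← pow_succ']; exact zpow_natCast Q (n + 1)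
      rw [h2, mul_inv]
      field_simp
  · have h : Int.negSucc n - 1 = Int.negSucc (n + 1) := by omega
    rw [h]
    simp [rq]

lemma rq_tendsto {Q : ℂ} (hQ : ‖Q‖ < 1) :
    Tendsto (fun n : ℕ => rq Q n) atTop (𝓝 (qp Q Q)⁻¹) :=
  (qp_tendsto Q hQ).inv₀ (qp_ne_zero_s16 hQ hQ)

lemma rq_bounded {Q : ℂ} (hQ : ‖Q‖ < 1) : ∃ C : ℝ, 0 ≤ C ∧ ∀ k : ℤ, ‖rq Q k‖ ≤ C := by
  obtain ⟨C, hC⟩ := (rq_tendsto hQ).norm.bddAbove_range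
  have h : ∀ n : ℕ, ‖rq Q n‖ ≤ C := fun n => hC ⟨n, rfl⟩
  have h0 : 0 ≤ C := (norm_nonneg _).trans (h 0)
  refine ⟨C, h0, fun k => ?_⟩
  rcases k with n | n
  · exact h n
  · simpa [rq] using h0

lemma hasSum_congr_eq {f g : ℤ → ℂ} {a b : ℂ} (hf : HasSum f a) (hfg : ∀ n, g n = f n)
    (hab : b = a) : HasSum g b := by
  rw [hab, show g = f from funext hfg]
  exact hf

/-- The finite form of the triple product: the coefficients are central `q`-binomials. -/
lemma hasSum_finite_triple {x Q : ℂ} (hx : x ≠ 0) (hQ0 : Q ≠ 0) (hQ : ‖Q‖ < 1) (N : ℕ) :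
    HasSum (fun n : ℤ => (-x) ^ n * Q ^ ch n * (rq Q (N + n) * rq Q (N - n)))
      ((∏ k ∈ Finset.range N, (1 - x * Q ^ k)) * (∏ k ∈ Finset.range N, (1 - Q / x * Q ^ k)) *
        rq Q ((2 * N : ℕ) : ℤ)) := by
  induction N with
  | zero =>
    have h := hasSum_ite_eq (0 : ℤ) (1 : ℂ)
    convert h using 1
    · funext n
      rcases lt_trichotomy n 0 with hn | hn | hn
      · obtain ⟨m, rfl⟩ := Int.eq_negSucc_of_lt_zero hn
        simp [rq]
      · simp [hn, rq, ch_zero]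
      · obtain ⟨m, hm⟩ := Int.eq_negSucc_of_lt_zero (neg_neg_of_pos hn)
        have : rq Q (-n) = 0 := by rw [hm]; rfl
        simp [this, hn.ne']
    · simp [rq]
  | succ N ih =>
    -- The step multiplies by `(1 - x Q ^ N) (1 - Q ^ (N + 1) / x)`, a sum of three monomials.
    obtain ⟨f, hf⟩ : ∃ f : ℤ → ℂ,
        f = fun n => (-x) ^ n * Q ^ ch n * (rq Q (N + n) * rq Q (N - n)) := ⟨_, rfl⟩
    rw [← hf] at ih
    obtain ⟨S, hS⟩ : ∃ S : ℂ, S = (∏ k ∈ Finset.range N, (1 - x * Q ^ k)) *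
      (∏ k ∈ Finset.range N, (1 - Q / x * Q ^ k)) * rq Q ((2 * N : ℕ) : ℤ) := ⟨_, rfl⟩
    rw [← hS] at ih
    have h1 : HasSum (fun n => f (n - 1)) S := (Equiv.subRight (1 : ℤ)).hasSum_iff.mpr ih
    have h2 : HasSum (fun n => f (n + 1)) S := (Equiv.addRight (1 : ℤ)).hasSum_iff.mpr ih
    have hA : (1 - Q * Q ^ (2 * N)) ≠ 0 := one_sub_ne_zero hQ _
    have hB : (1 - Q * Q ^ (2 * N + 1)) ≠ 0 := one_sub_ne_zero hQ _
    have h3 := (((ih.mul_left (1 + Q ^ (2 * N + 1))).add (h1.mul_left (-x * Q ^ N))).add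
      (h2.mul_left (-Q ^ (N + 1) / x))).mul_left
        ((1 - Q * Q ^ (2 * N)) * (1 - Q * Q ^ (2 * N + 1)))⁻¹
    refine (hasSum_congr_eq h3 ?_ ?_)
    · intro n
      simp only [hf]
      have e1 : rq Q (N + n) = (1 - Q * Q ^ N * Q ^ n) * rq Q (N + 1 + n) := by
        have := rq_sub_one hQ (N + 1 + n)
        rw [show (N : ℤ) + 1 + n - 1 = N + n by ring] at this
        rw [this, zpow_add₀ hQ0, zpow_add₀ hQ0, zpow_one, zpow_natCast]
        ring
      have e2 : rq Q (N - n) = (1 - Q * Q ^ N / Q ^ n) * rq Q (N + 1 - n) := by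
        have := rq_sub_one hQ (N + 1 - n)
        rw [show (N : ℤ) + 1 - n - 1 = N - n by ring] at this
        rw [this, zpow_sub₀ hQ0, zpow_add₀ hQ0, zpow_one, zpow_natCast]
        ring
      have e3 : rq Q (N + (n - 1)) = (1 - Q ^ N * Q ^ n) * rq Q (N + n) := by
        have := rq_sub_one hQ (N + n)
        rw [show (N : ℤ) + n - 1 = N + (n - 1) by ring] at this
        rw [this, zpow_add₀ hQ0, zpow_natCast]
      have e4 : rq Q (N - (n + 1)) = (1 - Q ^ N / Q ^ n) * rq Q (N - n) := by
        have := rq_sub_one hQ (N - n)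
        rw [show (N : ℤ) - n - 1 = N - (n + 1) by ring] at this
        rw [this, zpow_sub₀ hQ0, zpow_natCast]
      rw [e3, e4, e1, e2, show (N : ℤ) - (n - 1) = N + 1 - n by ring,
        show (N : ℤ) + (n + 1) = N + 1 + n by ring, ch_add_one, ch_sub_one,
        zpow_sub₀ (neg_ne_zero.mpr hx), zpow_add₀ (neg_ne_zero.mpr hx), zpow_add₀ hQ0,
        zpow_sub₀ hQ0, zpow_sub₀ hQ0, zpow_one, zpow_one]
      push_cast
      have hn : Q ^ n ≠ 0 := zpow_ne_zero _ hQ0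
      rw [eq_inv_mul_iff_mul_eq₀ (mul_ne_zero hA hB)]
      generalize Q ^ n = u at *
      generalize (-x) ^ n = v at *
      generalize Q ^ ch n = w at *
      generalize rq Q (N + 1 + n) = r at *
      generalize rq Q (N + 1 - n) = s at *
      field_simp
      ring
    · rw [hS, Finset.prod_range_succ, Finset.prod_range_succ]
      have e1 : rq Q ((2 * N : ℕ) : ℤ) = (1 - Q * Q ^ (2 * N)) * (1 - Q * Q ^ (2 * N + 1)) *
          rq Q ((2 * (N + 1) : ℕ) : ℤ) := by
        have a1 := rq_sub_one hQ ((2 * N + 1 : ℕ) : ℤ)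
        have a2 := rq_sub_one hQ ((2 * (N + 1) : ℕ) : ℤ)
        rw [zpow_natCast] at a1 a2
        rw [show ((2 * N + 1 : ℕ) : ℤ) - 1 = ((2 * N : ℕ) : ℤ) by push_cast; ring] at a1
        rw [show ((2 * (N + 1) : ℕ) : ℤ) - 1 = ((2 * N + 1 : ℕ) : ℤ) by push_cast; ring] at a2
        rw [a1, a2]
        ring
      rw [e1]
      field_simp
      ring

/-- Jacobi's triple product identity, the limit of its finite form by dominated convergence. -/
theorem triple_product {x Q : ℂ} (hx : x ≠ 0) (hQ0 : Q ≠ 0) (hQ : ‖Q‖ < 1) :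
    ∑' n : ℤ, (-x) ^ n * Q ^ ch n = qp x Q * qp (Q / x) Q * qp Q Q := by
  have hJ := qp_ne_zero_s16 hQ hQ
  obtain ⟨C, hC0, hC⟩ := rq_bounded hQ
  have hlim (n : ℤ) : Tendsto (fun N : ℕ => rq Q (N + n)) atTop (𝓝 (qp Q Q)⁻¹) := by
    have h : Tendsto (fun N : ℕ => ((N : ℤ) + n).toNat) atTop atTop := by
      refine tendsto_atTop.mpr fun b => ?_
      filter_upwards [eventually_ge_atTop (b + n.natAbs)] with N hN
      omega
    refine ((rq_tendsto hQ).comp h).congr' ?_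
    filter_upwards [eventually_ge_atTop n.natAbs] with N hN
    simp only [Function.comp]
    rw [Int.toNat_of_nonneg (by omega)]
  have h1 := tendsto_tsum_of_dominated_convergence
    (f := fun (N : ℕ) (n : ℤ) => (-x) ^ n * Q ^ ch n * (rq Q (N + n) * rq Q (N - n)))
    (𝓕 := atTop)
    ((summable_norm_theta_s16 (neg_ne_zero.mpr hx) hQ0 hQ).mul_right (C * C))
    (fun n => ((hlim n).mul (hlim (-n))).const_mul ((-x) ^ n * Q ^ ch n))
    (Eventually.of_forall fun N n => by
      rw [norm_mul _ (_ * _), norm_mul (rq _ _)]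
      exact mul_le_mul_of_nonneg_left
        (mul_le_mul (hC _) (hC _) (norm_nonneg _) hC0) (norm_nonneg _))
  simp_rw [fun N => (hasSum_finite_triple hx hQ0 hQ N).tsum_eq] at h1
  have h2 := ((qp_tendsto x hQ).mul (qp_tendsto (Q / x) hQ)).mul
    ((rq_tendsto hQ).comp (tendsto_id.const_mul_atTop' (r := 2) (by norm_num)))
  have h3 := tendsto_nhds_unique h1 h2
  rw [tsum_mul_right] at h3
  field_simp at h3
  linear_combination h3

/-! ### One-variable theta series -/

/-- The general term `s ^ n * q ^ (b n (n - 1) / 2 + a n)` of a theta series; it is used with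
`s = 1` and `s = -1`. -/
noncomputable def tt (q s : ℂ) (a : ℤ) (b : ℕ) (n : ℤ) : ℂ := s ^ n * q ^ (b * ch n + a * n)

/-- The theta series `∑ s ^ n * q ^ (b n (n - 1) / 2 + a n)` over all integers `n`. -/
noncomputable def th (q s : ℂ) (a : ℤ) (b : ℕ) : ℂ := ∑' n : ℤ, tt q s a b n

lemma tt_eq {q s : ℂ} (hq0 : q ≠ 0) (a : ℤ) (b : ℕ) (n : ℤ) :
    tt q s a b n = (s * q ^ a) ^ n * (q ^ b) ^ ch n := by
  rw [tt, mul_zpow, ← zpow_mul, ← zpow_natCast, ← zpow_mul, mul_assoc, ← zpow_add₀ hq0, add_comm]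

lemma tt_summable {q s : ℂ} (hq0 : q ≠ 0) (hq : ‖q‖ < 1) (hs : s ≠ 0) (a : ℤ) {b : ℕ}
    (hb : b ≠ 0) : Summable fun n => ‖tt q s a b n‖ := by
  simp_rw [tt_eq hq0]
  exact summable_norm_theta_s16 (mul_ne_zero hs (zpow_ne_zero _ hq0)) (pow_ne_zero _ hq0)
    (norm_pow_lt_one hq hb)

/-- The triple product for theta series whose parameters are exponents. -/
lemma th_prod {q s : ℂ} (hq0 : q ≠ 0) (hq : ‖q‖ < 1) (hs : s * s = 1) (a c : ℕ)
    (hb : a + c ≠ 0) :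
    th q s a (a + c) = qp (-s * q ^ a) (q ^ (a + c)) * qp (-s * q ^ c) (q ^ (a + c)) *
      qp (q ^ (a + c)) (q ^ (a + c)) := by
  have hs0 : s ≠ 0 := left_ne_zero_of_mul_eq_one hs
  have h := triple_product (x := -s * q ^ a) (Q := q ^ (a + c))
    (mul_ne_zero (neg_ne_zero.mpr hs0) (pow_ne_zero _ hq0)) (pow_ne_zero _ hq0)
    (norm_pow_lt_one hq hb)
  have h2 : q ^ (a + c) / (-s * q ^ a) = -s * q ^ c := by
    rw [div_eq_iff (mul_ne_zero (neg_ne_zero.mpr hs0) (pow_ne_zero _ hq0))]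
    linear_combination (-q ^ (a + c)) * hs
  rw [h2] at h
  rw [← h, th]
  simp_rw [tt_eq hq0]
  simp

lemma inv_of_sq {s : ℂ} (hs : s * s = 1) : s⁻¹ = s := inv_eq_of_mul_eq_one_left hs

/-- The reflection `n ↦ -n`. -/
lemma th_symm (q : ℂ) {s : ℂ} (hs : s * s = 1) (a a' : ℤ) {b : ℕ} (h : a + a' = b) :
    th q s a b = th q s a' b := by
  rw [th, th, ← (Equiv.neg ℤ).tsum_eq]
  refine tsum_congr fun n => ?_
  simp only [tt, Equiv.neg_apply, ch_neg, zpow_neg]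
  rw [← inv_zpow, inv_of_sq hs, ← h]
  congr 2
  ring

lemma th_scale (q s : ℂ) (k : ℕ) (a : ℤ) (b : ℕ) : th q s (k * a) (k * b) = th (q ^ k) s a b := by
  refine tsum_congr fun n => ?_
  rw [tt, tt, ← zpow_natCast q k, ← zpow_mul]
  congr 2
  push_cast
  ring

/-- The alternating series with `a = b` is antisymmetric under `n ↦ -1 - n`. -/
lemma th_neg_self (q : ℂ) (b : ℕ) : th q (-1) b b = 0 := by
  have h : th q (-1) b b = -th q (-1) b b := by
    conv_lhs => rw [th, ← (Equiv.subLeft (-1 : ℤ)).tsum_eq]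
    rw [th, ← tsum_neg]
    refine tsum_congr fun n => ?_
    simp only [tt, Equiv.subLeft_apply]
    rw [show (-1 - n : ℤ) = -(n + 1) by ring, ch_neg, ch_add_one, zpow_neg, ← inv_zpow,
      inv_of_sq (by norm_num : (-1 : ℂ) * -1 = 1), zpow_add₀ (by norm_num), zpow_one]
    rw [show (b * (ch n + n + (n + 1)) + b * -(n + 1) : ℤ) = b * ch n + b * n by ring]
    ring
  exact self_eq_neg.mp h

/-! ### Dissections of theta series -/

lemma th_mul_th {q s s' : ℂ} (hq0 : q ≠ 0) (hq : ‖q‖ < 1) (hs : s ≠ 0) (hs' : s' ≠ 0) (a a' : ℤ)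
    {b b' : ℕ} (hb : b ≠ 0) (hb' : b' ≠ 0) :
    th q s a b * th q s' a' b' = ∑' z : ℤ × ℤ, tt q s a b z.1 * tt q s' a' b' z.2 :=
  tsum_mul_tsum_of_summable_norm (tt_summable hq0 hq hs a hb) (tt_summable hq0 hq hs' a' hb')

/-- A sum over a set cut into finitely many pieces, each parametrized by `β`. -/
lemma tsum_pieces {α β : Type*} {k : ℕ} {F : α → ℂ} (hF : Summable F) (g : Fin k → β → α)
    (hg : Function.Bijective fun z : Fin k × β => g z.1 z.2) :
    ∑' x, F x = ∑ i, ∑' y, F (g i y) := by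
  have hs := ((Equiv.ofBijective _ hg).summable_iff (f := F)).mpr hF
  rw [← (Equiv.ofBijective _ hg).tsum_eq F]
  exact hs.tsum_prod.trans (tsum_fintype _)

/-- Residues of an integer modulo `5`. -/
def res5 : Fin 5 → ℤ := ![0, 1, 2, -1, 3]

/-- Representatives of `ℤ × ℤ` modulo the index-`5` sublattice spanned by `(1, 2)` and
`(-2, 1)`. -/
def off5 : Fin 5 → ℤ × ℤ := ![(0, 0), (1, 0), (0, 1), (0, -1), (-1, 0)]

lemma bij_res5 : Function.Bijective fun z : Fin 5 × ℤ => 5 * z.2 + res5 z.1 := by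
  constructor
  · rintro ⟨i, a⟩ ⟨j, b⟩ h
    fin_cases i <;> fin_cases j <;> simp [res5] at h ⊢ <;> omega
  · intro n
    have h : n % 5 = 0 ∨ n % 5 = 1 ∨ n % 5 = 2 ∨ n % 5 = 4 ∨ n % 5 = 3 := by omega
    rcases h with h | h | h | h | h
    · exact ⟨(0, n / 5), by simp [res5]; omega⟩
    · exact ⟨(1, n / 5), by simp [res5]; omega⟩
    · exact ⟨(2, n / 5), by simp [res5]; omega⟩
    · exact ⟨(3, n / 5 + 1), by simp [res5]; omega⟩
    · exact ⟨(4, n / 5), by simp [res5]; omega⟩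

lemma bij_off5 : Function.Bijective fun z : Fin 5 × (ℤ × ℤ) =>
    (z.2.1 - 2 * z.2.2 + (off5 z.1).1, 2 * z.2.1 + z.2.2 + (off5 z.1).2) := by
  constructor
  · rintro ⟨i, a, b⟩ ⟨j, c, d⟩ h
    fin_cases i <;> fin_cases j <;> simp [off5] at h ⊢ <;> omega
  · rintro ⟨n, m⟩
    have h : (n + 2 * m) % 5 = 0 ∨ (n + 2 * m) % 5 = 1 ∨ (n + 2 * m) % 5 = 2 ∨
      (n + 2 * m) % 5 = 3 ∨ (n + 2 * m) % 5 = 4 := by omega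
    rcases h with h | h | h | h | h
    · exact ⟨(0, (n + 2 * m) / 5, (m - 2 * n) / 5), by ext <;> simp [off5] <;> omega⟩
    · exact ⟨(1, (n - 1 + 2 * m) / 5, (m - 2 * (n - 1)) / 5), by ext <;> simp [off5] <;> omega⟩
    · exact ⟨(2, (n + 2 * (m - 1)) / 5, (m - 1 - 2 * n) / 5), by ext <;> simp [off5] <;> omega⟩
    · exact ⟨(3, (n + 2 * (m + 1)) / 5, (m + 1 - 2 * n) / 5), by ext <;> simp [off5] <;> omega⟩
    · exact ⟨(4, (n + 1 + 2 * m) / 5, (m - 2 * (n + 1)) / 5), by ext <;> simp [off5] <;> omega⟩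

lemma bij_two : Function.Bijective fun z : Fin 2 × (ℤ × ℤ) =>
    (z.2.1 + z.2.2 + (z.1 : ℕ), z.2.1 - z.2.2) := by
  constructor
  · rintro ⟨i, a, b⟩ ⟨j, c, d⟩ h
    fin_cases i <;> fin_cases j <;> simp at h ⊢ <;> omega
  · rintro ⟨n, m⟩
    have h : (n + m) % 2 = 0 ∨ (n + m) % 2 = 1 := by omega
    rcases h with h | h
    · exact ⟨(0, (n + m) / 2, (n - m) / 2), by ext <;> simp <;> omega⟩
    · exact ⟨(1, (n - 1 + m) / 2, (n - 1 - m) / 2), by ext <;> simp <;> omega⟩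

lemma neg_one_zpow_congr {m n : ℤ} (h : (2 : ℤ) ∣ m - n) : (-1 : ℂ) ^ m = (-1) ^ n := by
  obtain ⟨k, hk⟩ := h
  rw [show m = n + 2 * k by omega, zpow_add₀ (by norm_num), zpow_mul]
  norm_num

/-- A product of two theta terms along a coset of a sublattice of `ℤ × ℤ`, refactored into two
theta terms: the exponents have to match as quadratic polynomials and the signs as characters. -/
lemma tsum_refactor {q : ℂ} (hq0 : q ≠ 0) (hq : ‖q‖ < 1) {n m : ℤ × ℤ → ℤ} {s₁ s₂ s s' : ℂ}
    {a₁ a₂ : ℤ} {b₁ b₂ : ℕ} (hs : s ≠ 0) (hs' : s' ≠ 0) (ε : ℂ) (A B C : ℤ) {b : ℕ} (hb : b ≠ 0)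
    (h1 : ∀ u v : ℤ, s₁ ^ n (u, v) * s₂ ^ m (u, v) = ε * (s ^ u * s' ^ v))
    (h2 : ∀ u v : ℤ, b₁ * ch (n (u, v)) + a₁ * n (u, v) + (b₂ * ch (m (u, v)) + a₂ * m (u, v)) =
      C + (b * ch u + A * u) + (b * ch v + B * v)) :
    ∑' z, tt q s₁ a₁ b₁ (n z) * tt q s₂ a₂ b₂ (m z) = ε * q ^ C * (th q s A b * th q s' B b) := by
  rw [th_mul_th hq0 hq hs hs' A B hb hb, ← tsum_mul_left]
  refine tsum_congr ?_
  rintro ⟨u, v⟩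
  have e1 := h1 u v
  have e2 := congrArg (fun k => q ^ k) (h2 u v)
  simp only [zpow_add₀ hq0] at e2
  simp only [tt, zpow_add₀ hq0]
  linear_combination (s₁ ^ n (u, v) * s₂ ^ m (u, v)) * e2 +
    (q ^ C * (q ^ (b * ch u) * q ^ (A * u)) * (q ^ (b * ch v) * q ^ (B * v))) * e1

/-- The dissection of `θ(q, q ^ 4) θ(-q ^ 2, -q ^ 3)` by an index-`5` sublattice. One of the five
cosets contributes the factor `θ(-1, -q ^ 25) = 0`. -/
lemma dissect_five {q : ℂ} (hq0 : q ≠ 0) (hq : ‖q‖ < 1) :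
    th q 1 1 5 * th q (-1) 2 5 = th (q ^ 5) 1 2 5 * th (q ^ 5) (-1) 2 5 +
      q * (th (q ^ 5) 1 2 5 * th (q ^ 5) (-1) 1 5) - q ^ 2 * (th (q ^ 5) 1 1 5 * th (q ^ 5) (-1) 1 5)
      - q ^ 3 * (th (q ^ 5) 1 0 5 * th (q ^ 5) (-1) 2 5) := by
  have hm : (-1 : ℂ) ≠ 0 := by norm_num
  have hmm : (-1 : ℂ) * -1 = 1 := by norm_num
  have h11 : (1 : ℂ) * 1 = 1 := by norm_num
  rw [th_mul_th hq0 hq one_ne_zero hm 1 2 (by norm_num) (by norm_num),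
    tsum_pieces (summable_mul_of_summable_norm (tt_summable hq0 hq one_ne_zero 1 (by norm_num))
      (tt_summable hq0 hq hm 2 (by norm_num)))
      (fun i (z : ℤ × ℤ) => (z.1 - 2 * z.2 + (off5 i).1, 2 * z.1 + z.2 + (off5 i).2)) bij_off5]
  have key (i : Fin 5) (A B C : ℤ)
      (h2 : ∀ u v : ℤ, (5 : ℕ) * ch (u - 2 * v + (off5 i).1) + 1 * (u - 2 * v + (off5 i).1) +
        ((5 : ℕ) * ch (2 * u + v + (off5 i).2) + 2 * (2 * u + v + (off5 i).2)) =
        C + ((25 : ℕ) * ch u + A * u) + ((25 : ℕ) * ch v + B * v)) :=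
    tsum_refactor hq0 hq (n := fun z => z.1 - 2 * z.2 + (off5 i).1)
      (m := fun z => 2 * z.1 + z.2 + (off5 i).2) (s₁ := 1) (s₂ := -1) (s := 1) (s' := -1)
      one_ne_zero hm ((-1) ^ (off5 i).2) A B C (b := 25) (by norm_num)
      (fun u v => by
        rw [one_zpow, one_zpow, one_mul, one_mul, ← zpow_add₀ hm]
        exact neg_one_zpow_congr ⟨u, by ring⟩) h2
  have sc (s : ℂ) (a : ℤ) : th q s (5 * a) 25 = th (q ^ 5) s a 5 := th_scale q s 5 a 5
  rw [Fin.sum_univ_five, key 0 (5 * 2) (5 * 3) 0, key 1 (5 * 3) (5 * 1) 1, key 2 (5 * 4) (5 * 4) 2,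
    key 3 (5 * 0) (5 * 2) 3, key 4 (5 * 1) (5 * 5) 4]
  · simp only [sc]
    rw [th_symm (q ^ 5) hmm 3 2 (by norm_num), th_symm (q ^ 5) h11 3 2 (by norm_num),
      th_symm (q ^ 5) h11 4 1 (by norm_num), th_symm (q ^ 5) hmm 4 1 (by norm_num),
      show th (q ^ 5) (-1) 5 5 = 0 from th_neg_self (q ^ 5) 5]
    simp [off5, zpow_ofNat]
    ring
  all_goals
    intro u v
    simp [off5]
    refine mul_left_cancel₀ (two_ne_zero : (2 : ℤ) ≠ 0) ?_
    first
    | linear_combination 5 * two_mul_ch (u - 2 * v) + 5 * two_mul_ch (2 * u + v) -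
        25 * two_mul_ch u - 25 * two_mul_ch v
    | linear_combination 5 * two_mul_ch (u - 2 * v + 1) + 5 * two_mul_ch (2 * u + v) -
        25 * two_mul_ch u - 25 * two_mul_ch v
    | linear_combination 5 * two_mul_ch (u - 2 * v) + 5 * two_mul_ch (2 * u + v + 1) -
        25 * two_mul_ch u - 25 * two_mul_ch v
    | linear_combination 5 * two_mul_ch (u - 2 * v) + 5 * two_mul_ch (2 * u + v + -1) -
        25 * two_mul_ch u - 25 * two_mul_ch v
    | linear_combination 5 * two_mul_ch (u - 2 * v + -1) + 5 * two_mul_ch (2 * u + v) -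
        25 * two_mul_ch u - 25 * two_mul_ch v

/-- The same sublattice dissects `φ(-p) ^ 2`, where `φ(-p) = ∑ (-1) ^ n p ^ (n ^ 2)`. -/
lemma dissect_phi {q : ℂ} (hq0 : q ≠ 0) (hq : ‖q‖ < 1) :
    th q (-1) 1 2 ^ 2 = th q (-1) 5 10 ^ 2 - 4 * q * (th q (-1) 1 10 * th q (-1) 3 10) := by
  have hm : (-1 : ℂ) ≠ 0 := by norm_num
  have hmm : (-1 : ℂ) * -1 = 1 := by norm_num
  rw [sq, th_mul_th hq0 hq hm hm 1 1 (by norm_num) (by norm_num),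
    tsum_pieces (summable_mul_of_summable_norm (tt_summable hq0 hq hm 1 (by norm_num))
      (tt_summable hq0 hq hm 1 (by norm_num)))
      (fun i (z : ℤ × ℤ) => (z.1 - 2 * z.2 + (off5 i).1, 2 * z.1 + z.2 + (off5 i).2)) bij_off5]
  have key (i : Fin 5) (A B C : ℤ)
      (h2 : ∀ u v : ℤ, (2 : ℕ) * ch (u - 2 * v + (off5 i).1) + 1 * (u - 2 * v + (off5 i).1) +
        ((2 : ℕ) * ch (2 * u + v + (off5 i).2) + 1 * (2 * u + v + (off5 i).2)) =
        C + ((10 : ℕ) * ch u + A * u) + ((10 : ℕ) * ch v + B * v)) :=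
    tsum_refactor hq0 hq (n := fun z => z.1 - 2 * z.2 + (off5 i).1)
      (m := fun z => 2 * z.1 + z.2 + (off5 i).2) (s₁ := -1) (s₂ := -1) (s := -1) (s' := -1)
      hm hm ((-1) ^ ((off5 i).1 + (off5 i).2)) A B C (b := 10) (by norm_num)
      (fun u v => by
        rw [← zpow_add₀ hm, ← zpow_add₀ hm, ← zpow_add₀ hm]
        exact neg_one_zpow_congr ⟨u - v, by ring⟩) h2
  rw [Fin.sum_univ_five, key 0 5 5 0, key 1 7 1 1, key 2 9 7 1, key 3 1 3 1, key 4 3 9 1]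
  · rw [th_symm q hmm 7 3 (by norm_num), th_symm q hmm 9 1 (by norm_num)]
    simp [off5]
    ring
  all_goals
    intro u v
    simp [off5]
    first
    | linear_combination two_mul_ch (u - 2 * v) + two_mul_ch (2 * u + v) -
        5 * two_mul_ch u - 5 * two_mul_ch v
    | linear_combination two_mul_ch (u - 2 * v + 1) + two_mul_ch (2 * u + v) -
        5 * two_mul_ch u - 5 * two_mul_ch v
    | linear_combination two_mul_ch (u - 2 * v) + two_mul_ch (2 * u + v + 1) -
        5 * two_mul_ch u - 5 * two_mul_ch v
    | linear_combination two_mul_ch (u - 2 * v) + two_mul_ch (2 * u + v + -1) -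
        5 * two_mul_ch u - 5 * two_mul_ch v
    | linear_combination two_mul_ch (u - 2 * v + -1) + two_mul_ch (2 * u + v) -
        5 * two_mul_ch u - 5 * two_mul_ch v

/-- The dissection of a product of two theta series by the parity of `n + m`, for the two
placements of the sign. -/
lemma dissect_two {q : ℂ} (hq0 : q ≠ 0) (hq : ‖q‖ < 1) {s s' : ℂ}
    (h : s = 1 ∧ s' = -1 ∨ s = -1 ∧ s' = 1) :
    th q s 1 5 * th q s' 2 5 = th q (-1) 3 10 * th q (-1) 4 10 +
      s * q * (th q (-1) 1 10 * th q (-1) 2 10) := by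
  have hm : (-1 : ℂ) ≠ 0 := by norm_num
  have hmm : (-1 : ℂ) * -1 = 1 := by norm_num
  have hs : s ≠ 0 := by rcases h with h | h <;> rw [h.1] <;> norm_num
  have hs' : s' ≠ 0 := by rcases h with h | h <;> rw [h.2] <;> norm_num
  rw [th_mul_th hq0 hq hs hs' 1 2 (by norm_num) (by norm_num),
    tsum_pieces (summable_mul_of_summable_norm (tt_summable hq0 hq hs 1 (by norm_num))
      (tt_summable hq0 hq hs' 2 (by norm_num)))
      (fun i (z : ℤ × ℤ) => (z.1 + z.2 + (i : ℕ), z.1 - z.2)) bij_two]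
  have key (i : Fin 2) (A B C : ℤ)
      (h2 : ∀ u v : ℤ, (5 : ℕ) * ch (u + v + (i : ℕ)) + 1 * (u + v + (i : ℕ)) +
        ((5 : ℕ) * ch (u - v) + 2 * (u - v)) =
        C + ((10 : ℕ) * ch u + A * u) + ((10 : ℕ) * ch v + B * v)) :=
    tsum_refactor hq0 hq (n := fun z => z.1 + z.2 + (i : ℕ))
      (m := fun z => z.1 - z.2) (s₁ := s) (s₂ := s') (s := -1) (s' := -1)
      hm hm (s ^ (i : ℕ)) A B C (b := 10) (by norm_num)
      (fun u v => by
        rw [← zpow_natCast, ← zpow_add₀ hm]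
        rcases h with ⟨rfl, rfl⟩ | ⟨rfl, rfl⟩
        · rw [one_zpow, one_zpow, one_mul, one_mul]
          exact neg_one_zpow_congr ⟨-v, by ring⟩
        · rw [one_zpow, mul_one, ← zpow_add₀ hm]
          exact neg_one_zpow_congr ⟨0, by ring⟩) h2
  rw [Fin.sum_univ_two, key 0 3 4 0, key 1 8 9 1]
  · rw [th_symm q hmm 8 2 (by norm_num), th_symm q hmm 9 1 (by norm_num)]
    simp
    exact Or.inl (mul_comm _ _)
  · intro u v
    simp
    refine mul_left_cancel₀ (two_ne_zero : (2 : ℤ) ≠ 0) ?_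
    linear_combination 5 * two_mul_ch (u + v + 1) + 5 * two_mul_ch (u - v) -
      10 * two_mul_ch u - 10 * two_mul_ch v
  · intro u v
    simp
    refine mul_left_cancel₀ (two_ne_zero : (2 : ℤ) ≠ 0) ?_
    linear_combination 5 * two_mul_ch (u + v) + 5 * two_mul_ch (u - v) -
      10 * two_mul_ch u - 10 * two_mul_ch v

/-- The dissection of `∑ q ^ (n (n - 1) / 2) = 2 ψ(q)` modulo `5`. -/
lemma dissect_psi {q : ℂ} (hq0 : q ≠ 0) (hq : ‖q‖ < 1) :
    th q 1 0 1 = 2 * th (q ^ 5) 1 2 5 + 2 * q * th (q ^ 5) 1 1 5 + q ^ 3 * th (q ^ 5) 1 0 5 := by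
  have h11 : (1 : ℂ) * 1 = 1 := by norm_num
  rw [th, tsum_pieces (tt_summable hq0 hq one_ne_zero 0 (by norm_num)).of_norm
    (fun i u => 5 * u + res5 i) bij_res5]
  have key (i : Fin 5) (A C : ℤ)
      (h2 : ∀ u : ℤ, ch (5 * u + res5 i) = C + (25 * ch u + 5 * A * u)) :
      ∑' u : ℤ, tt q 1 0 1 (5 * u + res5 i) = q ^ C * th (q ^ 5) 1 A 5 := by
    rw [← th_scale, th, ← tsum_mul_left]
    refine tsum_congr fun u => ?_
    rw [tt, tt, one_zpow, one_zpow, one_mul, one_mul, ← zpow_add₀ hq0]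
    congr 1
    push_cast
    linear_combination h2 u
  rw [Fin.sum_univ_five, key 0 2 0, key 1 3 0, key 2 4 1, key 3 1 1, key 4 5 3]
  · rw [th_symm (q ^ 5) h11 3 2 (by norm_num), th_symm (q ^ 5) h11 4 1 (by norm_num),
      th_symm (q ^ 5) h11 5 0 (by norm_num)]
    simp [zpow_ofNat]
    ring
  all_goals
    intro u
    simp [res5]
    refine mul_left_cancel₀ (two_ne_zero : (2 : ℤ) ≠ 0) ?_
    first
    | linear_combination two_mul_ch (5 * u) - 25 * two_mul_ch u
    | linear_combination two_mul_ch (5 * u + 1) - 25 * two_mul_ch u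
    | linear_combination two_mul_ch (5 * u + 2) - 25 * two_mul_ch u
    | linear_combination two_mul_ch (5 * u + -1) - 25 * two_mul_ch u
    | linear_combination two_mul_ch (5 * u + 3) - 25 * two_mul_ch u

/-! ### Theta series in terms of the Rogers-Ramanujan products -/

/-- Euler's product `(q; q)_∞`. -/
noncomputable def eu (q : ℂ) : ℂ := qp q q

lemma eu_ne_zero {q : ℂ} (hq : ‖q‖ < 1) : eu q ≠ 0 := qp_ne_zero_s16 hq hq

lemma qp_pow_ne_zero {q : ℂ} (hq : ‖q‖ < 1) {a b : ℕ} (ha : a ≠ 0) (hb : b ≠ 0) :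
    qp (q ^ a) (q ^ b) ≠ 0 :=
  qp_ne_zero_s16 (norm_pow_lt_one hq hb) (norm_pow_lt_one hq ha)

lemma GG_ne_zero {q : ℂ} (hq : ‖q‖ < 1) : GG q ≠ 0 := by
  have h1 : qp q (q ^ 5) ≠ 0 := by
    simpa using qp_pow_ne_zero hq one_ne_zero (by norm_num : (5 : ℕ) ≠ 0)
  have h4 : qp (q ^ 4) (q ^ 5) ≠ 0 := qp_pow_ne_zero hq (by norm_num) (by norm_num)
  exact one_div_ne_zero (mul_ne_zero h1 h4)

lemma HH_ne_zero {q : ℂ} (hq : ‖q‖ < 1) : HH q ≠ 0 :=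
  one_div_ne_zero (mul_ne_zero (qp_pow_ne_zero hq (by norm_num) (by norm_num))
    (qp_pow_ne_zero hq (by norm_num) (by norm_num)))

lemma GG_mul {q : ℂ} (hq : ‖q‖ < 1) : GG q * (qp q (q ^ 5) * qp (q ^ 4) (q ^ 5)) = 1 := by
  have h := GG_ne_zero hq
  rw [GG] at h ⊢
  exact one_div_mul_cancel fun h0 => h (by rw [h0, div_zero])

lemma HH_mul {q : ℂ} (hq : ‖q‖ < 1) : HH q * (qp (q ^ 2) (q ^ 5) * qp (q ^ 3) (q ^ 5)) = 1 := by
  have h := HH_ne_zero hq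
  rw [HH] at h ⊢
  exact one_div_mul_cancel fun h0 => h (by rw [h0, div_zero])

lemma eu_eq {q : ℂ} (hq : ‖q‖ < 1) : eu q = eu (q ^ 5) / (GG q * HH q) := by
  rw [eq_div_iff (mul_ne_zero (GG_ne_zero hq) (HH_ne_zero hq)), eu, eu, qp_split_five hq]
  have h1 := GG_mul hq
  have h2 := HH_mul hq
  linear_combination (qp (q ^ 5) (q ^ 5)) * (GG q * (qp q (q ^ 5) * qp (q ^ 4) (q ^ 5))) * h2 +
    (qp (q ^ 5) (q ^ 5)) * h1

lemma GG_sq_mul {q : ℂ} (hq : ‖q‖ < 1) :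
    GG (q ^ 2) * (qp (q ^ 2) (q ^ 10) * qp (q ^ 8) (q ^ 10)) = 1 := by
  simpa only [← pow_mul] using GG_mul (norm_pow_lt_one hq two_ne_zero)

lemma HH_sq_mul {q : ℂ} (hq : ‖q‖ < 1) :
    HH (q ^ 2) * (qp (q ^ 4) (q ^ 10) * qp (q ^ 6) (q ^ 10)) = 1 := by
  simpa only [← pow_mul] using HH_mul (norm_pow_lt_one hq two_ne_zero)

lemma qp_ten {q : ℂ} (hq : ‖q‖ < 1) (a : ℕ) :
    qp (q ^ a) (q ^ 5) = qp (q ^ a) (q ^ 10) * qp (q ^ (a + 5)) (q ^ 10) := by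
  have h := qp_split_two (q ^ a) (norm_pow_lt_one hq (by norm_num : (5 : ℕ) ≠ 0))
  rwa [← pow_mul, ← pow_add] at h

lemma qp_neg_ten {q : ℂ} (hq : ‖q‖ < 1) (a : ℕ) :
    qp (-q ^ a) (q ^ 5) * qp (q ^ a) (q ^ 5) = qp (q ^ (2 * a)) (q ^ 10) := by
  have h := qp_neg_mul (q ^ a) (norm_pow_lt_one hq (by norm_num : (5 : ℕ) ≠ 0))
  rwa [← pow_mul, ← pow_mul, mul_comm a] at h

lemma th_neg_one_five {q : ℂ} (hq0 : q ≠ 0) (hq : ‖q‖ < 1) :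
    th q (-1) 1 5 = eu (q ^ 5) / GG q := by
  have h := th_prod hq0 hq (by norm_num : (-1 : ℂ) * -1 = 1) 1 4 (by norm_num)
  norm_num at h
  rw [h, eq_div_iff (GG_ne_zero hq), eu]
  linear_combination (qp (q ^ 5) (q ^ 5)) * GG_mul hq

lemma th_neg_two_five {q : ℂ} (hq0 : q ≠ 0) (hq : ‖q‖ < 1) :
    th q (-1) 2 5 = eu (q ^ 5) / HH q := by
  have h := th_prod hq0 hq (by norm_num : (-1 : ℂ) * -1 = 1) 2 3 (by norm_num)
  norm_num at h
  rw [h, eq_div_iff (HH_ne_zero hq), eu]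
  linear_combination (qp (q ^ 5) (q ^ 5)) * HH_mul hq

lemma th_pos_one_five {q : ℂ} (hq0 : q ≠ 0) (hq : ‖q‖ < 1) :
    th q 1 1 5 = eu (q ^ 5) * GG q / GG (q ^ 2) := by
  have h := th_prod hq0 hq (by norm_num : (1 : ℂ) * 1 = 1) 1 4 (by norm_num)
  norm_num at h
  have h1 := qp_neg_ten hq 1
  have h4 := qp_neg_ten hq 4
  norm_num at h1 h4
  rw [h, eq_div_iff (GG_ne_zero (norm_pow_lt_one hq two_ne_zero)), eu]
  have e := GG_mul hq
  have e2 := GG_sq_mul hq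
  rw [← h1, ← h4] at e2
  linear_combination (-qp (-q) (q ^ 5) * qp (-q ^ 4) (q ^ 5) * qp (q ^ 5) (q ^ 5) * GG (q ^ 2)) * e
    + (qp (q ^ 5) (q ^ 5) * GG q) * e2

lemma th_pos_two_five {q : ℂ} (hq0 : q ≠ 0) (hq : ‖q‖ < 1) :
    th q 1 2 5 = eu (q ^ 5) * HH q / HH (q ^ 2) := by
  have h := th_prod hq0 hq (by norm_num : (1 : ℂ) * 1 = 1) 2 3 (by norm_num)
  norm_num at h
  have h1 := qp_neg_ten hq 2
  have h4 := qp_neg_ten hq 3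
  norm_num at h1 h4
  rw [h, eq_div_iff (HH_ne_zero (norm_pow_lt_one hq two_ne_zero)), eu]
  have e := HH_mul hq
  have e2 := HH_sq_mul hq
  rw [← h1, ← h4] at e2
  linear_combination (-qp (-q ^ 2) (q ^ 5) * qp (-q ^ 3) (q ^ 5) * qp (q ^ 5) (q ^ 5) *
    HH (q ^ 2)) * e + (qp (q ^ 5) (q ^ 5) * HH q) * e2

lemma th_pos_zero {q : ℂ} (hq0 : q ≠ 0) (hq : ‖q‖ < 1) :
    th q 1 0 1 = 2 * eu (q ^ 2) ^ 2 / eu q := by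
  have h := th_prod hq0 hq (by norm_num : (1 : ℂ) * 1 = 1) 0 1 (by norm_num)
  norm_num at h
  rw [h, qp_shift (-1) hq, eq_div_iff (eu_ne_zero hq), eu, eu, ← qp_neg_mul q hq]
  norm_num
  ring

lemma th_pos_zero_five {q : ℂ} (hq0 : q ≠ 0) (hq : ‖q‖ < 1) :
    th q 1 0 5 = 2 * eu (q ^ 10) ^ 2 / eu (q ^ 5) := by
  have h := th_pos_zero (pow_ne_zero 5 hq0) (norm_pow_lt_one hq (by norm_num : (5 : ℕ) ≠ 0))
  rw [← th_scale, ← pow_mul] at h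
  simpa using h

lemma th_one_ten {q : ℂ} (hq0 : q ≠ 0) (hq : ‖q‖ < 1) :
    th q (-1) 1 10 = eu (q ^ 10) * HH (q ^ 2) / GG q := by
  have h := th_prod hq0 hq (by norm_num : (-1 : ℂ) * -1 = 1) 1 9 (by norm_num)
  have h1 := qp_ten hq 1
  have h4 := qp_ten hq 4
  norm_num at h h1 h4
  rw [h, eq_div_iff (GG_ne_zero hq), eu]
  have e := GG_mul hq
  have e2 := HH_sq_mul hq
  rw [h1, h4] at e
  linear_combination (-qp q (q ^ 10) * qp (q ^ 9) (q ^ 10) * qp (q ^ 10) (q ^ 10) * GG q) * e2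
    + (qp (q ^ 10) (q ^ 10) * HH (q ^ 2)) * e

lemma th_three_ten {q : ℂ} (hq0 : q ≠ 0) (hq : ‖q‖ < 1) :
    th q (-1) 3 10 = eu (q ^ 10) * GG (q ^ 2) / HH q := by
  have h := th_prod hq0 hq (by norm_num : (-1 : ℂ) * -1 = 1) 3 7 (by norm_num)
  have h1 := qp_ten hq 2
  have h4 := qp_ten hq 3
  norm_num at h h1 h4
  rw [h, eq_div_iff (HH_ne_zero hq), eu]
  have e := HH_mul hq
  have e2 := GG_sq_mul hq
  rw [h1, h4] at e
  linear_combination (-qp (q ^ 3) (q ^ 10) * qp (q ^ 7) (q ^ 10) * qp (q ^ 10) (q ^ 10) *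
    HH q) * e2 + (qp (q ^ 10) (q ^ 10) * GG (q ^ 2)) * e

lemma th_two_ten {q : ℂ} (hq0 : q ≠ 0) (hq : ‖q‖ < 1) :
    th q (-1) 2 10 = eu (q ^ 10) / GG (q ^ 2) := by
  have h := th_neg_one_five (pow_ne_zero 2 hq0) (norm_pow_lt_one hq two_ne_zero)
  rw [← th_scale, ← pow_mul] at h
  simpa using h

lemma th_four_ten {q : ℂ} (hq0 : q ≠ 0) (hq : ‖q‖ < 1) :
    th q (-1) 4 10 = eu (q ^ 10) / HH (q ^ 2) := by
  have h := th_neg_two_five (pow_ne_zero 2 hq0) (norm_pow_lt_one hq two_ne_zero)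
  rw [← th_scale, ← pow_mul] at h
  simpa using h

/-- Gauss's product for `∑ (-1) ^ n q ^ (n ^ 2)`. -/
lemma th_neg_one_two {q : ℂ} (hq0 : q ≠ 0) (hq : ‖q‖ < 1) :
    th q (-1) 1 2 = eu q ^ 2 / eu (q ^ 2) := by
  have h := th_prod hq0 hq (by norm_num : (-1 : ℂ) * -1 = 1) 1 1 (by norm_num)
  have h1 := qp_split_two q hq
  norm_num at h
  rw [← sq] at h1
  rw [h, eq_div_iff (eu_ne_zero (norm_pow_lt_one hq two_ne_zero)), eu, eu, h1]
  ring

lemma th_five_ten {q : ℂ} (hq0 : q ≠ 0) (hq : ‖q‖ < 1) :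
    th q (-1) 5 10 = eu (q ^ 5) ^ 2 / eu (q ^ 10) := by
  have h := th_neg_one_two (pow_ne_zero 5 hq0) (norm_pow_lt_one hq (by norm_num : (5 : ℕ) ≠ 0))
  rw [← th_scale, ← pow_mul] at h
  simpa using h

/-! ### Relations between the products at `p` and at `p ^ 2` -/

/-- The two parity dissections, as relations between `G(p), H(p), G(p ^ 2), H(p ^ 2)`. -/
lemma parity_relations {p : ℂ} (hp0 : p ≠ 0) (hp : ‖p‖ < 1) {x y X Y r : ℂ} (hx : GG p = x)
    (hy : HH p = y) (hX : GG (p ^ 2) = X) (hY : HH (p ^ 2) = Y)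
    (hr : eu (p ^ 10) ^ 2 / eu (p ^ 5) ^ 2 = r) :
    r * (x * X ^ 2 + p * y * Y ^ 2) = x ^ 2 * Y ∧ r * (x * X ^ 2 - p * y * Y ^ 2) = y ^ 2 * X := by
  have h1 := dissect_two hp0 hp (Or.inl ⟨rfl, rfl⟩)
  have h2 := dissect_two hp0 hp (Or.inr ⟨rfl, rfl⟩)
  have a0 := eu_ne_zero (norm_pow_lt_one hp (by norm_num : (5 : ℕ) ≠ 0))
  have x0 := GG_ne_zero hp
  have y0 := HH_ne_zero hp
  have X0 := GG_ne_zero (norm_pow_lt_one hp two_ne_zero)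
  have Y0 := HH_ne_zero (norm_pow_lt_one hp two_ne_zero)
  rw [th_pos_one_five hp0 hp, th_neg_two_five hp0 hp, th_three_ten hp0 hp, th_four_ten hp0 hp,
    th_one_ten hp0 hp, th_two_ten hp0 hp] at h1
  rw [th_neg_one_five hp0 hp, th_pos_two_five hp0 hp, th_three_ten hp0 hp, th_four_ten hp0 hp,
    th_one_ten hp0 hp, th_two_ten hp0 hp] at h2
  rw [hx] at x0
  rw [hy] at y0
  rw [hX] at X0
  rw [hY] at Y0
  rw [hx, hy, hX, hY] at h1 h2
  rw [← hr]
  field_simp at h1 h2 ⊢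
  constructor
  · linear_combination -h1
  · linear_combination -h2

/-- The dissection of `φ(-p) ^ 2`, combined with the parity relations. -/
lemma phi_relation {p : ℂ} (hp0 : p ≠ 0) (hp : ‖p‖ < 1) {x y X Y r : ℂ} (hx : GG p = x)
    (hy : HH p = y) (hX : GG (p ^ 2) = X) (hY : HH (p ^ 2) = Y)
    (hr : eu (p ^ 10) ^ 2 / eu (p ^ 5) ^ 2 = r) :
    x ^ 2 * y ^ 2 * ((y ^ 2 * X) ^ 2 + (y ^ 2 * X) * (x ^ 2 * Y) - (x ^ 2 * Y) ^ 2) =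
      X ^ 3 * Y ^ 3 := by
  obtain ⟨h1, h2⟩ := parity_relations hp0 hp hx hy hX hY hr
  have h3 := dissect_phi hp0 hp
  have a0 := eu_ne_zero (norm_pow_lt_one hp (by norm_num : (5 : ℕ) ≠ 0))
  have b0 := eu_ne_zero (norm_pow_lt_one hp (by norm_num : (10 : ℕ) ≠ 0))
  have x0 := GG_ne_zero hp
  have y0 := HH_ne_zero hp
  have X0 := GG_ne_zero (norm_pow_lt_one hp two_ne_zero)
  have Y0 := HH_ne_zero (norm_pow_lt_one hp two_ne_zero)
  have e2 := eu_eq (norm_pow_lt_one hp two_ne_zero)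
  rw [← pow_mul] at e2
  rw [th_neg_one_two hp0 hp, th_five_ten hp0 hp, th_one_ten hp0 hp, th_three_ten hp0 hp,
    eu_eq hp, e2] at h3
  rw [hx] at x0
  rw [hy] at y0
  rw [hX] at X0
  rw [hY] at Y0
  rw [hx, hy, hX, hY] at h3
  have h4 : X ^ 2 * Y ^ 2 = (x * y) ^ 4 - 4 * p * r ^ 2 * X * Y * (x * y) ^ 3 := by
    rw [← hr]
    norm_num at h3
    field_simp at h3 ⊢
    linear_combination h3
  linear_combination (-X * Y) * h4 + x ^ 2 * y ^ 2 * (2 * r * p * y * Y ^ 2) * (h1 + h2) +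
    x ^ 2 * y ^ 2 * (x ^ 2 * Y + y ^ 2 * X) * (h1 - h2)

/-! ### The identity -/

/-- The theorem with denominators cleared, where `p = q ^ 5`. Writing `q ^ 5` as `p` makes it a
polynomial in `q` of degree below `5` with coefficients depending on `p`, and the relations hold
coefficient by coefficient. -/
lemma final_poly {q p x y X Y r : ℂ} (hpq : p = q ^ 5) (hX : X ≠ 0) (hY : Y ≠ 0)
    (h1 : r * (x * X ^ 2 + p * y * Y ^ 2) = x ^ 2 * Y)
    (h2 : r * (x * X ^ 2 - p * y * Y ^ 2) = y ^ 2 * X)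
    (h3 : x ^ 2 * y ^ 2 * ((y ^ 2 * X) ^ 2 + (y ^ 2 * X) * (x ^ 2 * Y) - (x ^ 2 * Y) ^ 2) =
      X ^ 3 * Y ^ 3) :
    r * x ^ 2 * y ^ 2 *
        (x ^ 2 * X + q ^ 2 * y ^ 2 * X + 2 * q ^ 3 * x * y * Y - q ^ 4 * y ^ 2 * Y) *
        (x * y * X + q * y ^ 2 * X - q ^ 2 * x * y * Y - 2 * q ^ 3 * r * x * X * Y) =
      X ^ 2 * Y ^ 2 * (y * X + q * x * Y + q ^ 3 * r * X * Y) := by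
  have e1 : 2 * r * x * X ^ 2 = x ^ 2 * Y + y ^ 2 * X := by linear_combination h1 + h2
  have e2 : 2 * p * r * y * Y ^ 2 = x ^ 2 * Y - y ^ 2 * X := by linear_combination h1 - h2
  have c0 : r * x ^ 2 * y ^ 2 * (x ^ 3 * y * X ^ 2 -
      p * (2 * r * x * y ^ 2 * X ^ 2 * Y + 2 * x ^ 2 * y ^ 2 * Y ^ 2 + y ^ 4 * X * Y)) =
      X ^ 3 * Y ^ 2 * y := by
    refine mul_left_cancel₀ (mul_ne_zero two_ne_zero hY) ?_
    linear_combination x ^ 2 * y ^ 3 * (x ^ 2 * Y * e1 - (2 * r * x * X ^ 2) * e2 -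
      (x ^ 2 * Y - y ^ 2 * X) * e1 - 2 * x ^ 2 * Y * e2 - y ^ 2 * X * e2) + 2 * y * h3
  have c1 : r * x ^ 2 * y ^ 2 * (x ^ 2 * y ^ 2 * X ^ 2 +
      p * (x * y ^ 3 * Y ^ 2 - 4 * r * x ^ 2 * y * X * Y ^ 2)) = X ^ 2 * Y ^ 3 * x := by
    refine mul_left_cancel₀ (mul_ne_zero two_ne_zero hX) ?_
    linear_combination x ^ 2 * y ^ 2 * (x * y ^ 2 * X * e1 - 2 * x * (2 * r * x * X ^ 2) * e2 -
      2 * x * (x ^ 2 * Y - y ^ 2 * X) * e1 + x * y ^ 2 * X * e2) + 2 * x * h3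
  have c2 : y ^ 2 * X - x ^ 2 * Y + 2 * p * r * y * Y ^ 2 = 0 := by linear_combination e2
  have c3 : x ^ 2 * y ^ 2 * (y ^ 4 * X ^ 2 + 2 * x ^ 2 * y ^ 2 * X * Y -
      2 * r * x ^ 3 * X ^ 2 * Y) = X ^ 3 * Y ^ 3 := by
    linear_combination h3 - x ^ 4 * y ^ 2 * Y * e1
  rw [hpq] at c0 c1 c2
  linear_combination c0 + q * c1 + (q ^ 2 * r * x ^ 3 * y ^ 3 * X) * c2 + q ^ 3 * r * c3

lemma stmt16_of_ne_zero {q : ℂ} (hq0 : q ≠ 0) (hq : ‖q‖ < 1) :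
    HH q ^ 2 / (GG (q ^ 2) * HH (q ^ 2) ^ 2) =
      GG (q ^ 5) ^ 2 * GG (q ^ 10) + q ^ 2 * HH (q ^ 5) ^ 2 * GG (q ^ 10) +
        2 * q ^ 3 * GG (q ^ 5) * HH (q ^ 5) * HH (q ^ 10) -
        q ^ 4 * HH (q ^ 5) ^ 2 * HH (q ^ 10) := by
  obtain ⟨p, hpq⟩ : ∃ p, p = q ^ 5 := ⟨_, rfl⟩
  have hp0 : p ≠ 0 := hpq ▸ pow_ne_zero 5 hq0
  have hp : ‖p‖ < 1 := hpq ▸ norm_pow_lt_one hq (by norm_num)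
  have hp2 : q ^ 10 = p ^ 2 := by rw [hpq]; ring
  have d1 := dissect_five hq0 hq
  have d2 := dissect_psi hq0 hq
  have a0 := eu_ne_zero (norm_pow_lt_one hp (by norm_num : (5 : ℕ) ≠ 0))
  have b0 := eu_ne_zero (norm_pow_lt_one hp (by norm_num : (10 : ℕ) ≠ 0))
  have x0 := GG_ne_zero hp
  have y0 := HH_ne_zero hp
  have X0 := GG_ne_zero (norm_pow_lt_one hp two_ne_zero)
  have Y0 := HH_ne_zero (norm_pow_lt_one hp two_ne_zero)
  have x0' := GG_ne_zero hq
  have y0' := HH_ne_zero hq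
  have X0' := GG_ne_zero (norm_pow_lt_one hq two_ne_zero)
  have Y0' := HH_ne_zero (norm_pow_lt_one hq two_ne_zero)
  have eJ1 := eu_eq hq
  have eJ2 := eu_eq (norm_pow_lt_one hq two_ne_zero)
  rw [← pow_mul, show 2 * 5 = 10 from rfl] at eJ2
  have eJ5 := eu_eq hp
  have eJ10 := eu_eq (norm_pow_lt_one hp two_ne_zero)
  rw [← pow_mul, show 2 * 5 = 10 from rfl] at eJ10
  have hJ5 := eu_ne_zero hp
  have hJ10 := eu_ne_zero (norm_pow_lt_one hp two_ne_zero)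
  rw [th_pos_one_five hq0 hq, th_neg_two_five hq0 hq] at d1
  rw [th_pos_zero hq0 hq, eJ1, eJ2] at d2
  rw [hp2] at d2 ⊢
  rw [← hpq] at d1 d2 ⊢
  rw [th_pos_one_five hp0 hp, th_neg_two_five hp0 hp, th_pos_two_five hp0 hp,
    th_neg_one_five hp0 hp, th_pos_zero_five hp0 hp] at d1
  rw [th_pos_one_five hp0 hp, th_pos_two_five hp0 hp, th_pos_zero_five hp0 hp] at d2
  have hf := final_poly hpq X0 Y0
    (parity_relations hp0 hp rfl rfl rfl rfl rfl).1 (parity_relations hp0 hp rfl rfl rfl rfl rfl).2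
    (phi_relation hp0 hp rfl rfl rfl rfl rfl)
  clear hpq hp2 eJ1 eJ2
  generalize eu (p ^ 5) = a at *
  generalize eu (p ^ 10) = b at *
  generalize eu (p ^ 2) = J10 at *
  generalize eu p = J5 at *
  generalize GG q = x' at *
  generalize HH q = y' at *
  generalize GG (q ^ 2) = X' at *
  generalize HH (q ^ 2) = Y' at *
  generalize GG p = x at *
  generalize HH p = y at *
  generalize GG (p ^ 2) = X at *
  generalize HH (p ^ 2) = Y at *
  -- `d1` and `d2` express `θ(q, q ^ 4) θ(-q ^ 2, -q ^ 3)` and `2 ψ(q)` at level `p`.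
  refine mul_right_cancel₀ (b := J5 * x' / X' * (J5 / y')) (by positivity) ?_
  have hL : y' ^ 2 / (X' * Y' ^ 2) * (J5 * x' / X' * (J5 / y')) =
      2 * (J10 / (X' * Y')) ^ 2 / (J5 / (x' * y')) * (J5 ^ 3 / (2 * J10 ^ 2)) := by
    field_simp
  rw [hL, d1, d2, eJ5, eJ10]
  field_simp at hf ⊢
  linear_combination -hf

lemma GG_zero : GG 0 = 1 := by simp [GG, qp]

lemma HH_zero : HH 0 = 1 := by simp [HH, qp]

theorem stmt16 (q : ℂ) (hq : ‖q‖ < 1) :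
    HH q ^ 2 / (GG (q ^ 2) * HH (q ^ 2) ^ 2) =
      GG (q ^ 5) ^ 2 * GG (q ^ 10) + q ^ 2 * HH (q ^ 5) ^ 2 * GG (q ^ 10) +
        2 * q ^ 3 * GG (q ^ 5) * HH (q ^ 5) * HH (q ^ 10) -
        q ^ 4 * HH (q ^ 5) ^ 2 * HH (q ^ 10) := by
  rcases eq_or_ne q 0 with rfl | hq0
  · simp [GG_zero, HH_zero]
  · exact stmt16_of_ne_zero hq0 hq
end
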